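/- arXiv:2001.02470 — 2 statements merged into one kernel-verified Lean document; each statement's English description precedes it below -/
import Mathlib

section
/- Let n be a natural number. Then the following are equivalent: (i) any n elements of every f-generating set {x_1,...,x_s} of a with respect to M with s ≥ n form an unconditioned a-weak sequence on M; (ii) there exists an f-generating set {x_1,...,x_s} of a with respect to M such that s ≥ n and any n elements in it form an unconditioned a-weak sequence on M; (iii) there exists an f-generating set {x_1,...,x_s} of a with respect to M with s ≥ n such that the canonical map λ^i_M : H^i(x_1,...,x_s; M) → H^i_a(M) from Koszul cohomology to local cohomology is surjective for all 0 ≤ i ≤ n-1. -/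
/-!
Formalization of a statement from "A theory of relative generalized Cohen-Macaulay modules"
by Divaani-Aazar, Ghanbari Doust, Tousi and Zakeri.

Throughout, `R` is a commutative Noetherian ring and `M` a finitely generated `R`-module.
Conventions used below:
* `locH I i M` is the local cohomology module `H^i_I(M)` (Mathlib's `localCohomology`).
* Conditions `cd(I,M) = c`, `ara(I,M) = n`, `f_I(M) = f`, `grade(I,M) = r` are expressed by
  the predicates `IsCd`, `IsAra`, `IsFinDim`, `IsGrade`.
* Sequences are given as functions `Fin r → R`; `pSpan M x i = ⟨x_0,…,x_{i-1}⟩M`.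
* Koszul (co)homology is defined via the explicit (co)chain complex on the `p`-element
  subsets of `{0,…,n-1}`, and the canonical map `λ^i` into local cohomology is the structure
  map (at exponent 1) into the direct limit of Koszul cohomologies of powers of the sequence,
  which is the realization of `H^i_{⟨x⟩}(M)` used in the paper (2.1(iv)).
-/

open CategoryTheory

noncomputable section

variable {R : Type} [CommRing R]

/-! ### Sequences: prefix spans, weak sequences, filter regular sequences, d-sequences -/

/-- `pSpan M x i` is the submodule `⟨x_0, …, x_{i-1}⟩M` of `M`. -/
def pSpan (M : Type) [AddCommGroup M] [Module R M] {r : ℕ} (x : Fin r → R) (i : Fin r) :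
    Submodule R M :=
  Ideal.span (x '' {j | j < i}) • (⊤ : Submodule R M)

/-- `x_1, …, x_r` is an `I`-weak sequence on `M`:
`(⟨x_1,…,x_{i-1}⟩M :_M x_i) ⊆ (⟨x_1,…,x_{i-1}⟩M :_M I)` for all `i`. -/
def IsWeakSeq (I : Ideal R) (M : Type) [AddCommGroup M] [Module R M] {r : ℕ}
    (x : Fin r → R) : Prop :=
  ∀ i : Fin r, ∀ m : M, x i • m ∈ pSpan M x i → ∀ a ∈ I, a • m ∈ pSpan M x i

/-- `x_1, …, x_r` is an `I`-filter regular sequence on `M`: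
`(⟨x_1,…,x_{i-1}⟩M :_M x_i) ⊆ ⋃ₜ (⟨x_1,…,x_{i-1}⟩M :_M I^t)` for all `i`. -/
def IsFilterRegSeq (I : Ideal R) (M : Type) [AddCommGroup M] [Module R M] {r : ℕ}
    (x : Fin r → R) : Prop :=
  ∀ i : Fin r, ∀ m : M, x i • m ∈ pSpan M x i →
    ∃ t : ℕ, ∀ a ∈ I ^ t, a • m ∈ pSpan M x i

/-- An unconditioned `I`-filter regular sequence: filter regular in any order. -/
def IsUncondFilterRegSeq (I : Ideal R) (M : Type) [AddCommGroup M] [Module R M] {r : ℕ}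
    (x : Fin r → R) : Prop :=
  ∀ σ : Equiv.Perm (Fin r), IsFilterRegSeq I M (x ∘ σ)

/-- An unconditioned `I`-weak sequence: all positive powers, in any order, form an
`I`-weak sequence. -/
def IsUncondWeakSeq (I : Ideal R) (M : Type) [AddCommGroup M] [Module R M] {r : ℕ}
    (x : Fin r → R) : Prop :=
  ∀ σ : Equiv.Perm (Fin r), ∀ α : Fin r → ℕ, (∀ k, 0 < α k) →
    IsWeakSeq I M fun k => x (σ k) ^ α k

/-- `x_1, …, x_r` is a d-sequence on `M`:
`(⟨x_1,…,x_{i-1}⟩M :_M x_i x_j) = (⟨x_1,…,x_{i-1}⟩M :_M x_j)` for all `i ≤ j`. -/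
def IsDSeq (M : Type) [AddCommGroup M] [Module R M] {r : ℕ} (x : Fin r → R) : Prop :=
  ∀ i j : Fin r, i ≤ j → ∀ m : M,
    ((x i * x j) • m ∈ pSpan M x i ↔ x j • m ∈ pSpan M x i)

/-- An u.s.d-sequence on `M`: all positive powers, in any order, form a d-sequence. -/
def IsUSDSeq (M : Type) [AddCommGroup M] [Module R M] {r : ℕ} (x : Fin r → R) : Prop :=
  ∀ σ : Equiv.Perm (Fin r), ∀ α : Fin r → ℕ, (∀ k, 0 < α k) →
    IsDSeq M fun k => x (σ k) ^ α k

/-! ### Koszul cochain complexes, Koszul cohomology, and the canonical maps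
`λ^i_M : H^i(x; M) → H^i_{⟨x⟩}(M)` -/

/-- The degree `p` term of the Koszul cochain complex of `M` on `n` elements:
functions on the `p`-element subsets of `{1, …, n}` with values in `M`
(i.e. `Hom(Λ^p R^n, M)`). -/
abbrev KM (M : Type) (n p : ℕ) : Type := {s : Finset (Fin n) // s.card = p} → M

section Koszul

variable {M : Type} [AddCommGroup M] [Module R M]

/-- The Koszul cochain differential `K^p(x; M) → K^{p+1}(x; M)`. -/
def kd {n : ℕ} (x : Fin n → R) (p : ℕ) : KM M n p →ₗ[R] KM M n (p + 1) where
  toFun f t := ∑ j ∈ t.1.attach,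
    ((-1 : R) ^ (t.1.filter (fun a => a < j.1)).card * x j.1) •
      f ⟨t.1.erase j.1, by rw [Finset.card_erase_of_mem j.2, t.2]; omega⟩
  map_add' f g := by
    funext t
    simp [smul_add, Finset.sum_add_distrib]
  map_smul' r f := by
    funext t
    simp [Finset.smul_sum, smul_comm r]

/-- The transition map of Koszul cochain complexes raising the exponent of the defining
sequence by `e`: in degree `p` it multiplies the component at a subset `s`
by `(∏_{j ∈ s} x_j)^e`. -/
def kt {n : ℕ} (x : Fin n → R) (e p : ℕ) : KM M n p →ₗ[R] KM M n p where
  toFun f s := (∏ j ∈ s.1, x j) ^ e • f s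
  map_add' f g := by funext s; simp [smul_add]
  map_smul' r f := by funext s; simp [smul_comm r]

/-- The transition maps are maps of cochain complexes
`K^•(x^u; M) → K^•(x^{u+e}; M)`. -/
theorem kt_kd {n : ℕ} (x : Fin n → R) (u e p : ℕ) :
    (kt (M := M) x e (p + 1)).comp (kd (fun j => x j ^ u) p)
      = (kd (fun j => x j ^ (u + e)) p).comp (kt x e p) := by
  apply LinearMap.ext; intro f
  funext t
  simp only [LinearMap.comp_apply, kd, kt, LinearMap.coe_mk, AddHom.coe_mk]
  rw [Finset.smul_sum]
  refine Finset.sum_congr rfl fun j _ => ?_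
  rw [smul_smul, smul_smul]
  congr 1
  rw [← Finset.mul_prod_erase t.1 x j.2]
  ring

end Koszul

/-- The `R`-module of Koszul `p`-cocycles of `M` with respect to `y`. -/
def kZ {n : ℕ} (y : Fin n → R) (M : Type) [AddCommGroup M] [Module R M] (p : ℕ) :
    Submodule R (KM M n p) :=
  LinearMap.ker (kd y p)

/-- The `R`-module of Koszul `p`-coboundaries of `M` with respect to `y`. -/
def kB {n : ℕ} (y : Fin n → R) (M : Type) [AddCommGroup M] [Module R M] :
    (p : ℕ) → Submodule R (KM M n p)
  | 0 => ⊥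
  | (q + 1) => LinearMap.range (kd y q)

/-- The `p`-th Koszul cohomology module `H^p(y; M)`: cocycles modulo coboundaries. -/
abbrev Hk {n : ℕ} (y : Fin n → R) (M : Type) [AddCommGroup M] [Module R M] (p : ℕ) :=
  kZ y M p ⧸ ((kB y M p ⊓ kZ y M p).comap (kZ y M p).subtype)

section KoszulMaps

variable {M : Type} [AddCommGroup M] [Module R M]

theorem kt_mem_kZ {n : ℕ} (x : Fin n → R) {u v : ℕ} (h : u ≤ v) (p : ℕ) :
    ∀ f ∈ kZ (fun j => x j ^ (u + 1)) M p,
      kt x (v - u) p f ∈ kZ (fun j => x j ^ (v + 1)) M p := by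
  intro f hf
  have he : u + 1 + (v - u) = v + 1 := by omega
  have hc := congrArg (fun φ => φ f) (kt_kd (M := M) x (u + 1) (v - u) p)
  simp only [LinearMap.comp_apply] at hc
  rw [he] at hc
  simp only [kZ, LinearMap.mem_ker] at hf ⊢
  rw [← hc, hf, map_zero]

theorem kt_mem_kB {n : ℕ} (x : Fin n → R) {u v : ℕ} (h : u ≤ v) (p : ℕ) :
    ∀ f ∈ kB (fun j => x j ^ (u + 1)) M p,
      kt x (v - u) p f ∈ kB (fun j => x j ^ (v + 1)) M p := by
  intro f hf
  cases p with
  | zero =>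
      simp only [kB, Submodule.mem_bot] at hf ⊢
      rw [hf, map_zero]
  | succ q =>
      simp only [kB, LinearMap.mem_range] at hf ⊢
      obtain ⟨g, hg⟩ := hf
      refine ⟨kt x (v - u) q g, ?_⟩
      have he : u + 1 + (v - u) = v + 1 := by omega
      have hc := congrArg (fun φ => φ g) (kt_kd (M := M) x (u + 1) (v - u) q)
      simp only [LinearMap.comp_apply] at hc
      rw [he] at hc
      rw [← hc, hg]

end KoszulMaps

/-- The map `H^p(x^{u+1}; M) → H^p(x^{v+1}; M)`, `u ≤ v`, induced by the transition map of
Koszul cochain complexes. -/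
def ktH {n : ℕ} (x : Fin n → R) (M : Type) [AddCommGroup M] [Module R M] (p : ℕ)
    (u v : ℕ) (h : u ≤ v) :
    Hk (fun j => x j ^ (u + 1)) M p →ₗ[R] Hk (fun j => x j ^ (v + 1)) M p :=
  Submodule.mapQ _ _ ((kt x (v - u) p).restrict (kt_mem_kZ x h p)) (by
    rintro ⟨f, hfZ⟩ hfN
    simp only [Submodule.mem_comap, Submodule.mem_inf, Submodule.coe_subtype] at hfN ⊢
    exact ⟨kt_mem_kB x h p f hfN.1, kt_mem_kZ x h p f hfN.2⟩)

/-- `H^p_{⟨x⟩}(M)`, realized as the direct limit of the Koszul cohomology modules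
`H^p(x^{u+1}; M)` along the transition maps (cf. 2.1(iv) in the paper). -/
abbrev KLoc {n : ℕ} (x : Fin n → R) (M : Type) [AddCommGroup M] [Module R M] (p : ℕ) :=
  Module.DirectLimit (fun u : ℕ => Hk (fun j => x j ^ (u + 1)) M p)
    (fun u v h => ktH x M p u v h)

/-- Transport of Koszul cohomology along an equality of defining sequences. -/
def castHk {n : ℕ} (M : Type) [AddCommGroup M] [Module R M] (p : ℕ) {y z : Fin n → R}
    (h : y = z) : Hk y M p →ₗ[R] Hk z M p :=
  Eq.rec (motive := fun w _ => Hk y M p →ₗ[R] Hk w M p) LinearMap.id h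

/-- The canonical map `λ^p_M : H^p(x; M) → H^p_{⟨x⟩}(M)`, i.e. the structure map of the
direct limit at exponent `1`. -/
def klambda {n : ℕ} (x : Fin n → R) (M : Type) [AddCommGroup M] [Module R M] (p : ℕ) :
    Hk x M p →ₗ[R] KLoc x M p :=
  (Module.DirectLimit.of R ℕ (fun u : ℕ => Hk (fun j => x j ^ (u + 1)) M p)
      (fun u v h => ktH x M p u v h) 0).comp
    (castHk M p (funext fun j => by rw [zero_add, pow_one] :
      x = fun j => x j ^ (0 + 1)))

/-- Surjectivity of the canonical map `λ^p_M : H^p(x; M) → H^p_{⟨x⟩}(M)`. -/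
def LambdaSurj {n : ℕ} (x : Fin n → R) (M : Type) [AddCommGroup M] [Module R M] (p : ℕ) :
    Prop :=
  Function.Surjective (klambda x M p)

/-!
Write `⟨x_S⟩M` for the submodule generated by the members of a family `x` indexed by a finite set
`S`. For a filter regular family, the weak sequence condition says that `I` annihilates the
`I`-torsion of `M / ⟨x_j ^ α_j : j ∈ S⟩M` whenever `S` has fewer than `n` elements.

*Independence of the generators.* Prime avoidance turns any generating family into one that is
filter regular jointly with each of two given f-generating families, so it suffices to enlarge a
family by one element `z` and to discard elements. The enlargement rests on an exchange argument:
modulo `L`, if `y` kills the torsion modulo `x ^ a` and `x` kills the torsion modulo `y`, then `x`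
kills the torsion modulo `x ^ a`.

*Weak implies surjective.* Let `F` be a Koszul cochain of degree `i` on powers of `x`, closed
modulo `⟨x_S⟩M`. Contraction along `e_j` and induction on `i` modulo one more element show that
`b • F` becomes exact in the limit for each `b ∈ I`. A cochain `k` bounding `x_j • F` has degree
`i - 1` and is closed modulo `x_j`; if its class comes from a cochain `c` closed for `x` itself
modulo `x_j`, then that of `F` comes from the coboundary of `c` divided by `x_j`.

*Surjective implies weak.* If `m` is torsion modulo `⟨x_j ^ α_j : j ∈ S⟩M`, a monomial multiple of
`m` is the component at `S` of a cocycle of degree `S.card` on high powers of `x`. Surjectivity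
replaces that cocycle by a cocycle `g` of `x`, and `I • g S ⊆ ⟨x_S⟩M`. The monomial is cancelled by
the weak condition for smaller `S`, up to the saturations of the submodules obtained by dropping one
generator.
-/

open scoped Pointwise

section Saturation

variable {R M : Type*} [CommRing R] [AddCommGroup M] [Module R M]
  {I : Ideal R} {L L' : Submodule R M} {x z p : R} {m m' w : M}

theorem mem_sup_smul_top : m ∈ L ⊔ x • (⊤ : Submodule R M) ↔ ∃ w, m - x • w ∈ L := by
  constructor
  · intro hm
    obtain ⟨l, hl, _, hv, rfl⟩ := Submodule.mem_sup.1 hm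
    obtain ⟨w, -, rfl⟩ := (Submodule.mem_smul_pointwise_iff_exists _ _ _).1 hv
    exact ⟨w, by simpa using hl⟩
  · rintro ⟨w, hw⟩
    exact Submodule.mem_sup.2
      ⟨_, hw, _, Submodule.smul_mem_pointwise_smul w x ⊤ trivial, sub_add_cancel _ _⟩

theorem smul_mem_sup_smul_top (L : Submodule R M) (x : R) (w : M) :
    x • w ∈ L ⊔ x • (⊤ : Submodule R M) :=
  mem_sup_smul_top.2 ⟨w, by simp⟩

/-- The `I`-saturation `⋃ₜ (L :_M I ^ t)` of a submodule `L` of `M`. -/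
def idealSat (I : Ideal R) (L : Submodule R M) : Submodule R M where
  carrier := {m | ∃ t : ℕ, ∀ b ∈ I ^ t, b • m ∈ L}
  zero_mem' := ⟨0, fun b _ => by simp⟩
  add_mem' := by
    rintro m m' ⟨t, ht⟩ ⟨t', ht'⟩
    refine ⟨t + t', fun b hb => ?_⟩
    rw [smul_add]
    exact L.add_mem (ht b (Ideal.pow_le_pow_right (Nat.le_add_right t t') hb))
      (ht' b (Ideal.pow_le_pow_right (Nat.le_add_left t' t) hb))
  smul_mem' := by
    rintro c m ⟨t, ht⟩
    refine ⟨t, fun b hb => ?_⟩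
    rw [smul_comm]
    exact L.smul_mem c (ht b hb)

theorem mem_idealSat : m ∈ idealSat I L ↔ ∃ t : ℕ, ∀ b ∈ I ^ t, b • m ∈ L := Iff.rfl

theorem le_idealSat (I : Ideal R) (L : Submodule R M) : L ≤ idealSat I L :=
  fun _ hm => ⟨0, fun b _ => L.smul_mem b hm⟩

theorem idealSat_mono (h : L ≤ L') : idealSat I L ≤ idealSat I L' :=
  fun _ ⟨t, ht⟩ => ⟨t, fun b hb => h (ht b hb)⟩

theorem exists_pow_smul_mem_of_fg {N : Submodule R M} (hN : N.FG) (h : N ≤ idealSat I L) :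
    ∃ e : ℕ, ∀ b ∈ I ^ e, ∀ m ∈ N, b • m ∈ L := by
  classical
  obtain ⟨G, rfl⟩ := hN
  choose! e he using fun m (hm : m ∈ G) => mem_idealSat.1 (h (Submodule.subset_span hm))
  refine ⟨G.sup e, fun b hb m hm => ?_⟩
  suffices Submodule.span R (G : Set M) ≤ L.comap (b • LinearMap.id) from this hm
  exact Submodule.span_le.2 fun g hg => he g hg b (Ideal.pow_le_pow_right (Finset.le_sup hg) hb)

theorem exists_pow_smul_apply_mem {κ : Type*} [Finite κ] {f : κ → M}
    (h : ∀ k, f k ∈ idealSat I L) : ∃ e : ℕ, ∀ b ∈ I ^ e, ∀ k, b • f k ∈ L := by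
  obtain ⟨e, he⟩ := exists_pow_smul_mem_of_fg (Submodule.fg_span (Set.finite_range f))
    (Submodule.span_le.2 (Set.range_subset_iff.2 h))
  exact ⟨e, fun b hb k => he b hb _ (Submodule.subset_span ⟨k, rfl⟩)⟩

theorem smul_mem_of_span_eq {s : Set R} (hs : Ideal.span s = I) (h : ∀ r ∈ s, r • m ∈ L)
    {b : R} (hb : b ∈ I) : b • m ∈ L := by
  suffices I ≤ Submodule.comap (LinearMap.toSpanSingleton R M m) L from this hb
  rw [← hs]
  exact Submodule.span_le.2 h

/-- `z` is `I`-filter regular on `M / L`: the annihilator of `z` in `M / L` is `I`-torsion. -/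
def IsFilterReg (I : Ideal R) (L : Submodule R M) (z : R) : Prop :=
  ∀ m, z • m ∈ L → m ∈ idealSat I L

/-- `I` annihilates the `I`-torsion of `M / L`. -/
def KillsTorsion (I : Ideal R) (L : Submodule R M) : Prop :=
  ∀ m ∈ idealSat I L, ∀ b ∈ I, b • m ∈ L

theorem killsTorsion_of_span_eq {s : Set R} (hs : Ideal.span s = I)
    (h : ∀ r ∈ s, ∀ m ∈ idealSat I L, r • m ∈ L) : KillsTorsion I L :=
  fun m hm _ hb => smul_mem_of_span_eq hs (fun r hr => h r hr m hm) hb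

variable [IsNoetherianRing R]

theorem mem_idealSat_of_pow (t : ℕ) (h : ∀ b ∈ I ^ t, b • m ∈ idealSat I L) :
    m ∈ idealSat I L := by
  have hle : Submodule.map (LinearMap.toSpanSingleton R M m) (I ^ t) ≤ idealSat I L :=
    Submodule.map_le_iff_le_comap.2 h
  obtain ⟨e, he⟩ := exists_pow_smul_mem_of_fg ((IsNoetherian.noetherian (I ^ t)).map _) hle
  have hmul : I ^ e * I ^ t ≤ Submodule.comap (LinearMap.toSpanSingleton R M m) L :=
    Ideal.mul_le.2 fun b hb c hc => by
      simpa [mul_smul] using he b hb _ (Submodule.mem_map_of_mem hc)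
  exact ⟨e + t, fun b hb => hmul (pow_add I e t ▸ hb)⟩

theorem IsFilterReg.mem_idealSat (hz : IsFilterReg I L z) (hm : z • m ∈ idealSat I L) :
    m ∈ idealSat I L := by
  obtain ⟨t, ht⟩ := hm
  refine mem_idealSat_of_pow t fun b hb => hz _ ?_
  rw [smul_comm]
  exact ht b hb

theorem IsFilterReg.mem_idealSat_of_pow_smul (hz : IsFilterReg I L z) (k : ℕ)
    (hm : z ^ k • m ∈ idealSat I L) : m ∈ idealSat I L := by
  induction k with
  | zero => simpa using hm
  | succ k ih => exact ih (hz.mem_idealSat (by rwa [pow_succ', mul_smul] at hm))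

theorem IsFilterReg.pow (hz : IsFilterReg I L z) (k : ℕ) : IsFilterReg I L (z ^ k) :=
  fun _ hm => hz.mem_idealSat_of_pow_smul k (le_idealSat _ _ hm)

theorem IsFilterReg.mem_idealSat_of_smul_sub_smul_mem (hz : IsFilterReg I L z)
    (hw : p • m - z • w ∈ L) (hm : m ∈ idealSat I (L ⊔ z • (⊤ : Submodule R M))) :
    w ∈ idealSat I (L ⊔ p • (⊤ : Submodule R M)) := by
  obtain ⟨t, ht⟩ := hm
  refine mem_idealSat_of_pow t fun b hb => ?_
  obtain ⟨v, hv⟩ := mem_sup_smul_top.1 (ht b hb)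
  have hbw : b • w - p • v ∈ idealSat I L := by
    refine hz _ ?_
    convert L.sub_mem (L.smul_mem p hv) (L.smul_mem b hw) using 1
    module
  convert add_mem (idealSat_mono le_sup_left hbw)
    (le_idealSat I _ (smul_mem_sup_smul_top L p v)) using 1
  module

theorem IsFilterReg.sup_smul_top_comm (hx : IsFilterReg I L x)
    (hz : IsFilterReg I (L ⊔ x • (⊤ : Submodule R M)) z) :
    IsFilterReg I (L ⊔ z • (⊤ : Submodule R M)) x := by
  intro m hm
  obtain ⟨w, hw⟩ := mem_sup_smul_top.1 hm
  have hzw : z • w - x • m ∈ L := by simpa using L.neg_mem hw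
  exact hx.mem_idealSat_of_smul_sub_smul_mem hzw
    (hz w (mem_sup_smul_top.2 ⟨m, hzw⟩))

theorem IsFilterReg.sup_pow_smul_top (hx : IsFilterReg I L x) (hz : IsFilterReg I L z)
    (hxz : IsFilterReg I (L ⊔ x • (⊤ : Submodule R M)) z) (a : ℕ) :
    IsFilterReg I (L ⊔ x ^ a • (⊤ : Submodule R M)) z :=
  hz.sup_smul_top_comm ((hx.sup_smul_top_comm hxz).pow a)

theorem KillsTorsion.mem_of_mem_idealSat (hL : KillsTorsion I L) (hx : IsFilterReg I L x)
    (hxI : x ∈ I) (hm : m ∈ idealSat I L) (hmx : m ∈ L ⊔ x • (⊤ : Submodule R M)) : m ∈ L := by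
  obtain ⟨w, hw⟩ := mem_sup_smul_top.1 hmx
  have hw' : w ∈ idealSat I L := by
    refine hx.mem_idealSat ?_
    convert sub_mem hm (le_idealSat I L hw) using 1
    module
  convert L.add_mem hw (hL w hw' x hxI) using 1
  module

end Saturation

section Families

theorem exists_notMem_of_card_lt {ι : Type*} [Fintype ι] {S : Finset ι}
    (hS : S.card < Fintype.card ι) : ∃ j, j ∉ S := by
  rw [← Finset.card_univ] at hS
  obtain ⟨j, -, hj⟩ := Finset.exists_mem_notMem_of_card_lt_card hS
  exact ⟨j, hj⟩

variable {R M ι : Type*} [CommRing R] [AddCommGroup M] [Module R M] {I : Ideal R}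
  {x y : ι → R} {S T A B : Finset ι} {n : ℕ} {α : ι → ℕ} {L : Submodule R M}

variable (M) in
/-- The submodule `⟨y_j : j ∈ S⟩M` of `M`. -/
def spanOn (y : ι → R) (S : Finset ι) : Submodule R M :=
  Ideal.span (y '' S) • (⊤ : Submodule R M)

@[simp]
theorem spanOn_empty (y : ι → R) : spanOn M y ∅ = ⊥ := by
  simp [spanOn]

theorem spanOn_insert [DecidableEq ι] (y : ι → R) (j : ι) (S : Finset ι) :
    spanOn M y (insert j S) = spanOn M y S ⊔ y j • (⊤ : Submodule R M) := by
  rw [spanOn, Finset.coe_insert, Set.image_insert_eq, Ideal.span_insert, Submodule.sup_smul,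
    Submodule.ideal_span_singleton_smul, sup_comm, spanOn]

theorem smul_mem_spanOn (y : ι → R) {j : ι} (hj : j ∈ S) (m : M) : y j • m ∈ spanOn M y S :=
  Submodule.smul_mem_smul (Ideal.subset_span ⟨j, hj, rfl⟩) trivial

theorem spanOn_le : spanOn M y S ≤ L ↔ ∀ j ∈ S, ∀ m : M, y j • m ∈ L := by
  refine ⟨fun h j hj m => h (smul_mem_spanOn y hj m), fun h => Submodule.smul_le.2 ?_⟩
  rintro r hr m -
  refine smul_mem_of_span_eq rfl ?_ hr
  rintro _ ⟨j, hj, rfl⟩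
  exact h j hj m

theorem spanOn_mono (y : ι → R) (h : S ⊆ T) : spanOn M y S ≤ spanOn M y T :=
  spanOn_le.2 fun _ hj m => smul_mem_spanOn y (h hj) m

theorem spanOn_congr (h : ∀ j ∈ S, x j = y j) : spanOn M x S = spanOn M y S := by
  rw [spanOn, Set.image_congr h, spanOn]

theorem spanOn_pow_update_insert [DecidableEq ι] (x : ι → R) (α : ι → ℕ) {j : ι} (hj : j ∉ S)
    (a : ℕ) :
    spanOn M (fun i => x i ^ Function.update α j a i) (insert j S)
      = spanOn M (fun i => x i ^ α i) S ⊔ x j ^ a • (⊤ : Submodule R M) := by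
  rw [spanOn_insert, Function.update_self]
  congr 1
  refine spanOn_congr fun i hi => ?_
  rw [Function.update_of_ne (ne_of_mem_of_not_mem hi hj)]

theorem spanOn_pow_eq_top {j : ι} (hj : j ∈ S) (hα : α j = 0) :
    spanOn M (fun i => x i ^ α i) S = ⊤ :=
  eq_top_iff.2 fun m _ => by simpa [hα] using smul_mem_spanOn (fun i => x i ^ α i) hj m

/-- The elements `x_j`, `j ∈ A`, form an unconditioned `I`-filter regular sequence on `M / L`. -/
def IsFilterRegOn (I : Ideal R) (L : Submodule R M) (x : ι → R) (A : Finset ι) : Prop :=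
  ∀ S ⊆ A, ∀ j ∈ A, j ∉ S → IsFilterReg I (L ⊔ spanOn M x S) (x j)

theorem IsFilterRegOn.mono (h : IsFilterRegOn I L x B) (hAB : A ⊆ B) : IsFilterRegOn I L x A :=
  fun S hS j hj hjS => h S (hS.trans hAB) j (hAB hj) hjS

theorem IsFilterRegOn.of_insert [IsNoetherianRing R] [DecidableEq ι] {i : ι}
    (h : IsFilterRegOn I L x (insert i A)) (hi : i ∉ A) (a : ℕ) :
    IsFilterRegOn I (L ⊔ x i ^ a • (⊤ : Submodule R M)) x A := by
  intro S hS j hj hjS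
  have hS' : S ⊆ insert i A := hS.trans (Finset.subset_insert i A)
  have hj' : j ∈ insert i A := Finset.mem_insert_of_mem hj
  have hji : j ∉ insert i S := by
    simpa [hjS] using ne_of_mem_of_not_mem hj hi
  have hxz := h (insert i S) (Finset.insert_subset_insert i hS) j hj' hji
  rw [spanOn_insert, ← sup_assoc] at hxz
  rw [sup_right_comm]
  exact (h S hS' i (Finset.mem_insert_self i A) fun hiS => hi (hS hiS)).sup_pow_smul_top
    (h S hS' j hj' hjS) hxz a

theorem IsFilterRegOn.isFilterReg_sup_pow [IsNoetherianRing R] (h : IsFilterRegOn I L x A)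
    (α : ι → ℕ) (hS : S ⊆ A) {j : ι} (hj : j ∈ A) (hjS : j ∉ S) :
    IsFilterReg I (L ⊔ spanOn M (fun i => x i ^ α i) S) (x j) := by
  classical
  induction S using Finset.induction_on generalizing L A with
  | empty => simpa using h ∅ hS j hj hjS
  | insert i S hi ih =>
    rw [Finset.mem_insert, not_or] at hjS
    have hiA : i ∈ A := hS (Finset.mem_insert_self i S)
    rw [← Finset.insert_erase hiA] at h
    rw [spanOn_insert, ← sup_assoc, sup_right_comm]
    refine ih (h.of_insert (Finset.notMem_erase i A) (α i)) (fun l hl => ?_) ?_ hjS.2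
    · exact Finset.mem_erase.2
        ⟨ne_of_mem_of_not_mem hl hi, hS (Finset.mem_insert_of_mem hl)⟩
    · exact Finset.mem_erase.2 ⟨hjS.1, hj⟩

theorem IsFilterRegOn.isFilterReg_pow [IsNoetherianRing R]
    (h : IsFilterRegOn I (⊥ : Submodule R M) x A) (α : ι → ℕ) (hS : S ⊆ A) {j : ι} (hj : j ∈ A)
    (hjS : j ∉ S) : IsFilterReg I (spanOn M (fun i => x i ^ α i) S) (x j) := by
  simpa using h.isFilterReg_sup_pow α hS hj hjS

theorem IsFilterRegOn.isFilterReg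
    (h : IsFilterRegOn I (⊥ : Submodule R M) x A) (hS : S ⊆ A) {j : ι} (hj : j ∈ A)
    (hjS : j ∉ S) : IsFilterReg I (spanOn M x S) (x j) := by
  simpa using h S hS j hj hjS

variable (M) in
/-- Any `n` elements of the family `x_j`, `j ∈ A`, form an unconditioned `I`-weak sequence on `M`.
A zero exponent `α j` with `j ∈ S` is harmless: it makes the submodule all of `M`. -/
def IsUncondWeakOn (I : Ideal R) (x : ι → R) (n : ℕ) (A : Finset ι) : Prop :=
  ∀ S ⊆ A, S.card < n → ∀ α : ι → ℕ, KillsTorsion I (spanOn M (fun j => x j ^ α j) S)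

theorem isUncondWeakOn_of_pos
    (h : ∀ S ⊆ A, S.card < n → ∀ α : ι → ℕ, (∀ j, 0 < α j) →
      KillsTorsion I (spanOn M (fun j => x j ^ α j) S)) : IsUncondWeakOn M I x n A := by
  intro S hS hSn α
  by_cases hα : ∃ j ∈ S, α j = 0
  · obtain ⟨j, hj, hα⟩ := hα
    rw [spanOn_pow_eq_top hj hα]
    exact fun _ _ _ _ => trivial
  · push Not at hα
    rw [spanOn_congr (y := fun j => x j ^ max (α j) 1) fun j hj => by
      rw [max_eq_left (Nat.one_le_iff_ne_zero.2 (hα j hj))]]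
    exact h S hS hSn _ fun j => by positivity

theorem IsUncondWeakOn.mono (h : IsUncondWeakOn M I x n B) (hAB : A ⊆ B) :
    IsUncondWeakOn M I x n A :=
  fun S hS => h S (hS.trans hAB)

theorem IsUncondWeakOn.killsTorsion (h : IsUncondWeakOn M I x n A) (hS : S ⊆ A) (hn : S.card < n) :
    KillsTorsion I (spanOn M x S) := by
  simpa using h S hS hn 1

end Families

section Exchange

variable {R M ι : Type*} [CommRing R] [IsNoetherianRing R] [AddCommGroup M] [Module R M]
  {I : Ideal R}

theorem smul_mem_of_killsTorsion_sup_pow {L : Submodule R M} {x z : R} (hzI : z ∈ I) (hxI : x ∈ I)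
    (hx : IsFilterReg I L x) (hz : IsFilterReg I L z) (hL : KillsTorsion I L)
    (hLx : ∀ β : ℕ, KillsTorsion I (L ⊔ x ^ β • (⊤ : Submodule R M)))
    {m : M} (hm : m ∈ idealSat I (L ⊔ z • (⊤ : Submodule R M))) :
    x • m ∈ L ⊔ z • (⊤ : Submodule R M) := by
  obtain ⟨t, ht⟩ := id hm
  obtain ⟨u, hu⟩ := mem_sup_smul_top.1 (ht (x ^ t) (Ideal.pow_mem_pow hxI t))
  have hu_sat : u ∈ idealSat I (L ⊔ x ^ t • (⊤ : Submodule R M)) :=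
    hz.mem_idealSat_of_smul_sub_smul_mem hu hm
  obtain ⟨v, hv⟩ := mem_sup_smul_top.1 (hLx t u hu_sat x hxI)
  have hv_sat : v ∈ idealSat I (L ⊔ x • (⊤ : Submodule R M)) :=
    (hx.pow t).mem_idealSat_of_smul_sub_smul_mem hv hu_sat
  have hzv : z • v ∈ L ⊔ x • (⊤ : Submodule R M) := by
    simpa using hLx 1 v (by simpa using hv_sat) z hzI
  have hxm_sat : x • m - z • v ∈ idealSat I L := by
    refine hx.mem_idealSat_of_pow_smul t (le_idealSat I L ?_)
    convert L.add_mem (L.smul_mem x hu) (L.smul_mem z hv) using 1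
    module
  exact mem_sup_smul_top.2 ⟨v, hL.mem_of_mem_idealSat hx hxI hxm_sat
    (sub_mem (smul_mem_sup_smul_top L x m) hzv)⟩

theorem smul_mem_sup_pow_of_exchange {L : Submodule R M} {x y : R} {a : ℕ} (ha : 0 < a)
    (hxI : x ∈ I) (hx : IsFilterReg I L x) (hy : IsFilterReg I L y) (hL : KillsTorsion I L)
    (hyx : ∀ m ∈ idealSat I (L ⊔ x ^ a • (⊤ : Submodule R M)),
      y • m ∈ L ⊔ x ^ a • (⊤ : Submodule R M))
    (hxy : ∀ m ∈ idealSat I (L ⊔ y • (⊤ : Submodule R M)), x • m ∈ L ⊔ y • (⊤ : Submodule R M))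
    {m : M} (hm : m ∈ idealSat I (L ⊔ x ^ a • (⊤ : Submodule R M))) :
    x • m ∈ L ⊔ x ^ a • (⊤ : Submodule R M) := by
  obtain ⟨w, hw⟩ := mem_sup_smul_top.1 (hyx m hm)
  obtain ⟨v, hv⟩ :=
    mem_sup_smul_top.1 (hxy w ((hx.pow a).mem_idealSat_of_smul_sub_smul_mem hw hm))
  obtain ⟨b, rfl⟩ := Nat.exists_eq_add_of_lt ha
  rw [zero_add] at hw ⊢
  have hxm_sat : x • m - x ^ (b + 1) • v ∈ idealSat I L := by
    refine hy _ ?_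
    convert L.add_mem (L.smul_mem x hw) (L.smul_mem (x ^ (b + 1)) hv) using 1
    module
  refine mem_sup_smul_top.2 ⟨v, hL.mem_of_mem_idealSat hx hxI hxm_sat ?_⟩
  convert smul_mem_sup_smul_top L x (m - x ^ b • v) using 1
  rw [pow_succ]
  module

variable {x : ι → R} {A : Finset ι} {z : ι} {n : ℕ} [DecidableEq ι] {α : ι → ℕ}

theorem IsUncondWeakOn.smul_mem_spanOn_insert (hW : IsUncondWeakOn M I x n A)
    (hF : IsFilterRegOn I (⊥ : Submodule R M) x (insert z A)) (hAI : ∀ l ∈ A, x l ∈ I)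
    (hzI : x z ∈ I) (hzA : z ∉ A) {S : Finset ι} (hS : S ⊆ A) (hSn : S.card + 1 < n)
    (hα : 0 < α z) {l : ι} (hl : l ∈ A) (hlS : l ∉ S) {m : M}
    (hm : m ∈ idealSat I (spanOn M (fun j => x j ^ α j) (insert z S))) :
    x l • m ∈ spanOn M (fun j => x j ^ α j) (insert z S) := by
  have hAz : A ⊆ insert z A := Finset.subset_insert z A
  rw [spanOn_insert] at hm ⊢
  refine smul_mem_of_killsTorsion_sup_pow (Ideal.pow_mem_of_mem I hzI _ hα) (hAI l hl)
    (hF.isFilterReg_pow α (hS.trans hAz) (hAz hl) hlS)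
    ((hF.isFilterReg_pow α (hS.trans hAz) (Finset.mem_insert_self z A) fun h => hzA (hS h)).pow _)
    (hW S hS (by lia) α) (fun β => ?_) hm
  rw [← spanOn_pow_update_insert x α hlS]
  exact hW _ (Finset.insert_subset hl hS) (by rwa [Finset.card_insert_of_notMem hlS]) _

theorem IsUncondWeakOn.killsTorsion_spanOn_insert (hW : IsUncondWeakOn M I x n A)
    (hF : IsFilterRegOn I (⊥ : Submodule R M) x (insert z A)) (hI : Ideal.span (x '' A) = I)
    (hzI : x z ∈ I) (hzA : z ∉ A) (hn : n ≤ A.card) (hα : ∀ j, 0 < α j) {S : Finset ι}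
    (hS : S ⊆ A) (hSn : S.card + 1 < n) :
    KillsTorsion I (spanOn M (fun j => x j ^ α j) (insert z S)) := by
  have hAI : ∀ l ∈ A, x l ∈ I := fun l hl => hI ▸ Ideal.subset_span ⟨l, hl, rfl⟩
  induction S using Finset.strongInduction with | H S ih => ?_
  refine killsTorsion_of_span_eq hI ?_
  rintro _ ⟨l, hl, rfl⟩
  by_cases hlS : l ∉ S
  · exact fun m => hW.smul_mem_spanOn_insert hF hAI hzI hzA hS hSn (hα z) hl hlS
  rw [not_not] at hlS
  obtain ⟨k, hkA, hkS⟩ : ∃ k ∈ A, k ∉ S := Finset.exists_mem_notMem_of_card_lt_card (by lia)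
  have hS₁ : S.erase l ⊆ A := (Finset.erase_subset l S).trans hS
  have hcard : (S.erase l).card + 1 = S.card := Finset.card_erase_add_one hlS
  have hkl : k ≠ l := fun h => hkS (h ▸ hlS)
  have hkz : k ≠ z := ne_of_mem_of_not_mem hkA hzA
  have hlz : l ≠ z := ne_of_mem_of_not_mem hl hzA
  have hk₁ : k ∉ insert z (S.erase l) := by simp [hkz, hkS]
  have hl₁ : l ∉ insert z (S.erase l) := by simp [hlz]
  have hP : insert z (S.erase l) ⊆ insert z A := Finset.insert_subset_insert z hS₁
  have hyx := fun m => hW.smul_mem_spanOn_insert (m := m) hF hAI hzI hzA hS hSn (hα z) hkA hkS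
  have hxy := fun m => hW.smul_mem_spanOn_insert (α := Function.update α k 1) (m := m)
    hF hAI hzI hzA (Finset.insert_subset hkA hS₁)
    (by rwa [Finset.card_insert_of_notMem (by simp [hkS]), hcard])
    (by simpa [Function.update_of_ne hkz.symm] using hα z) hl (by simp [hkl.symm])
  rw [← Finset.insert_erase hlS, Finset.insert_comm, spanOn_insert] at hyx ⊢
  rw [Finset.insert_comm, spanOn_pow_update_insert x α hk₁, pow_one] at hxy
  exact fun m => smul_mem_sup_pow_of_exchange (hα l) (hAI l hl)
    (hF.isFilterReg_pow α hP (Finset.mem_insert_of_mem hl) hl₁)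
    (hF.isFilterReg_pow α hP (Finset.mem_insert_of_mem hkA) hk₁)
    (ih _ (Finset.erase_ssubset hlS) hS₁ (by lia)) hyx hxy

protected theorem IsUncondWeakOn.insert (hW : IsUncondWeakOn M I x n A)
    (hF : IsFilterRegOn I (⊥ : Submodule R M) x (insert z A)) (hI : Ideal.span (x '' A) = I)
    (hzI : x z ∈ I) (hn : n ≤ A.card) : IsUncondWeakOn M I x n (insert z A) := by
  by_cases hzA : z ∈ A
  · rwa [Finset.insert_eq_of_mem hzA]
  refine isUncondWeakOn_of_pos fun S hS hSn α hα => ?_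
  rw [Finset.subset_insert_iff] at hS
  by_cases hz : z ∈ S
  · rw [← Finset.insert_erase hz]
    exact hW.killsTorsion_spanOn_insert hF hI hzI hzA hn hα hS
      (by rwa [Finset.card_erase_add_one hz])
  · exact hW S (Finset.erase_eq_of_notMem hz ▸ hS) hSn α

protected theorem IsUncondWeakOn.union (hW : IsUncondWeakOn M I x n A) {B : Finset ι}
    (hF : IsFilterRegOn I (⊥ : Submodule R M) x (B ∪ A)) (hI : Ideal.span (x '' A) = I)
    (hBI : ∀ j ∈ B, x j ∈ I) (hn : n ≤ A.card) : IsUncondWeakOn M I x n (B ∪ A) := by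
  induction B using Finset.induction_on with
  | empty => simpa using hW
  | insert z B _ ih =>
    rw [Finset.insert_union] at hF ⊢
    have hBI' : ∀ j ∈ B, x j ∈ I := fun j hj => hBI j (Finset.mem_insert_of_mem hj)
    have hspan : Ideal.span (x '' ↑(B ∪ A)) = I := by
      rw [Finset.coe_union, Set.image_union, Ideal.span_union, hI, sup_eq_right]
      exact Ideal.span_le.2 (Set.forall_mem_image.2 hBI')
    exact (ih (hF.mono (Finset.subset_insert _ _)) hBI').insert hF hspan
      (hBI z (Finset.mem_insert_self z B))
      (hn.trans (Finset.card_le_card Finset.subset_union_right))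

end Exchange

section GenericGenerators

theorem exists_add_notMem_of_forall_prime {R : Type*} [CommRing R] (c : R) (J : Ideal R)
    (𝓟 : Finset (Ideal R)) (hprime : ∀ P ∈ 𝓟, P.IsPrime)
    (h : ∀ P ∈ 𝓟, ¬ Ideal.span {c} ⊔ J ≤ P) : ∃ j ∈ J, ∀ P ∈ 𝓟, c + j ∉ P := by
  classical
  -- `j` is taken outside the primes containing `c` and inside the others; the primes contained
  -- in a prime that contains `c` take care of themselves.
  let 𝓐 := 𝓟.filter fun P => c ∈ P
  let 𝓑 := 𝓟.filter fun Q => c ∉ Q ∧ ∀ P ∈ 𝓐, ¬ Q ≤ P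
  obtain ⟨j, hj, hj𝓐⟩ : ∃ j ∈ J ⊓ 𝓑.inf id, ∀ P ∈ 𝓐, j ∉ P := by
    by_contra! hcon
    obtain ⟨P, hP, hle⟩ := (Ideal.subset_union_prime (f := id) (s := 𝓐) ⊥ ⊥
      (fun P hP _ _ => hprime P (Finset.mem_filter.1 hP).1)).1
        (fun j hj => Set.mem_iUnion₂.2 (by simpa using hcon j hj))
    obtain ⟨hP𝓟, hcP⟩ := Finset.mem_filter.1 hP
    have := hprime P hP𝓟
    rcases (Ideal.IsPrime.inf_le this).1 hle with hJP | h𝓑P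
    · exact h P hP𝓟 (sup_le ((Ideal.span_singleton_le_iff_mem _).2 hcP) hJP)
    · obtain ⟨Q, hQ, hQP⟩ := (Ideal.IsPrime.inf_le' this).1 h𝓑P
      exact (Finset.mem_filter.1 hQ).2.2 P hP hQP
  have hadd𝓐 : ∀ P ∈ 𝓐, c + j ∉ P := fun P hP hcj =>
    hj𝓐 P hP ((Ideal.add_mem_iff_right P (Finset.mem_filter.1 hP).2).1 hcj)
  refine ⟨j, hj.1, fun P hP hcj => ?_⟩
  by_cases hcP : c ∈ P
  · exact hadd𝓐 P (Finset.mem_filter.2 ⟨hP, hcP⟩) hcj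
  by_cases hex : ∃ P' ∈ 𝓐, P ≤ P'
  · obtain ⟨P', hP', hle⟩ := hex
    exact hadd𝓐 P' hP' (hle hcj)
  · push Not at hex
    have hjP : j ∈ P :=
      Finset.inf_le (f := id) (Finset.mem_filter.2 ⟨hP, hcP, hex⟩ : P ∈ 𝓑) hj.2
    exact hcP ((Ideal.add_mem_iff_left P hjP).1 hcj)

theorem span_range_update_add {R κ : Type*} [CommRing R] [DecidableEq κ] (z : κ → R) (k : κ)
    {j : R} (hj : j ∈ Ideal.span (z '' {k}ᶜ)) :
    Ideal.span (Set.range (Function.update z k (z k + j))) = Ideal.span (Set.range z) := by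
  have hrange (w : κ → R) : Set.range w = insert (w k) (w '' {k}ᶜ) := by
    rw [← Set.image_insert_eq, Set.insert_eq, Set.union_compl_self, Set.image_univ]
  have himage : Function.update z k (z k + j) '' {k}ᶜ = z '' {k}ᶜ :=
    Set.image_congr fun i hi => Function.update_of_ne hi _ _
  rw [hrange, himage, Function.update_self, hrange z]
  have hsub : z '' {k}ᶜ ⊆ insert (z k + j) (z '' {k}ᶜ) := Set.subset_insert _ _
  refine le_antisymm (Ideal.span_le.2 (Set.insert_subset ?_ ?_))
    (Ideal.span_le.2 (Set.insert_subset ?_ (hsub.trans Ideal.subset_span)))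
  · exact add_mem (Ideal.subset_span (Set.mem_insert _ _))
      (Ideal.span_mono (Set.subset_insert _ _) hj)
  · exact (Set.subset_insert _ _).trans Ideal.subset_span
  · exact (Ideal.add_mem_iff_left _ (Ideal.span_mono hsub hj)).1
      (Ideal.subset_span (Set.mem_insert _ _))

variable {R M ι κ : Type*} [CommRing R] [AddCommGroup M] [Module R M] {I : Ideal R}
  {L : Submodule R M} {x y : ι → R} {A B : Finset ι} {n : ℕ}

theorem IsFilterRegOn.congr (h : IsFilterRegOn I L x A) (hxy : ∀ j ∈ A, x j = y j) :
    IsFilterRegOn I L y A := by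
  intro S hS j hj hjS
  rw [← hxy j hj, ← spanOn_congr fun i hi => hxy i (hS hi)]
  exact h S hS j hj hjS

theorem spanOn_map (y : κ → R) (f : ι ↪ κ) (S : Finset ι) :
    spanOn M y (S.map f) = spanOn M (y ∘ f) S := by
  rw [spanOn, Finset.coe_map, ← Set.image_comp, spanOn]

theorem isUncondWeakOn_map {y : κ → R} (f : ι ↪ κ) :
    IsUncondWeakOn M I y n (A.map f) ↔ IsUncondWeakOn M I (y ∘ f) n A := by
  constructor
  · intro h S hS hSn α
    have := h (S.map f) (Finset.map_subset_map.2 hS) (by simpa using hSn)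
      (Function.extend f α 0)
    simpa [spanOn_map, Function.comp_def, f.injective.extend_apply] using this
  · intro h S hS hSn α
    obtain ⟨S, hS', rfl⟩ := Finset.subset_map_iff.1 hS
    rw [spanOn_map]
    exact h S hS' (by simpa using hSn) (α ∘ f)

theorem spanOn_sumElim (x : ι → R) (y : κ → R) (S : Finset (ι ⊕ κ)) :
    spanOn M (Sum.elim x y) S = spanOn M x S.toLeft ⊔ spanOn M y S.toRight := by
  refine le_antisymm (spanOn_le.2 ?_) (sup_le (spanOn_le.2 ?_) (spanOn_le.2 ?_))
  · rintro (j | j) hj m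
    · exact le_sup_left (a := spanOn M x _) (smul_mem_spanOn x (Finset.mem_toLeft.2 hj) m)
    · exact le_sup_right (a := spanOn M x _) (smul_mem_spanOn y (Finset.mem_toRight.2 hj) m)
  · exact fun j hj m => smul_mem_spanOn (Sum.elim x y) (Finset.mem_toLeft.1 hj) m
  · exact fun j hj m => smul_mem_spanOn (Sum.elim x y) (Finset.mem_toRight.1 hj) m

variable [IsNoetherianRing R]

protected theorem IsFilterRegOn.insert [DecidableEq ι] {z : ι} (hA : IsFilterRegOn I L x A)
    (hz : ∀ S ⊆ A, IsFilterReg I (L ⊔ spanOn M x S) (x z)) :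
    IsFilterRegOn I L x (insert z A) := by
  intro S hS j hj hjS
  rw [Finset.subset_insert_iff] at hS
  rcases Finset.mem_insert.1 hj with rfl | hjA
  · exact hz S (Finset.erase_eq_of_notMem hjS ▸ hS)
  by_cases hzS : z ∈ S
  · have hjS' : j ∉ S.erase z := fun h => hjS (Finset.erase_subset z S h)
    rw [← Finset.insert_erase hzS, spanOn_insert, ← sup_assoc]
    refine (hA _ hS j hjA hjS').sup_smul_top_comm ?_
    rw [sup_assoc, ← spanOn_insert]
    exact hz _ (Finset.insert_subset hjA hS)
  · exact hA S (Finset.erase_eq_of_notMem hzS ▸ hS) j hjA hjS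

theorem IsFilterRegOn.sumElim {y : κ → R} {B : Finset κ}
    (hx : IsFilterRegOn I (⊥ : Submodule R M) x A)
    (hy : ∀ S : Finset ι, IsFilterRegOn I (spanOn M x S) y B) :
    IsFilterRegOn I (⊥ : Submodule R M) (Sum.elim x y) (A.disjSum B) := by
  classical
  intro S hS
  obtain ⟨hSA, hSB⟩ := Finset.subset_disjSum.1 hS
  rw [bot_sup_eq, spanOn_sumElim]
  rintro (i | k) hj hjS
  · rw [Finset.inl_mem_disjSum] at hj
    rw [← Finset.mem_toLeft] at hjS
    rw [Sum.elim_inl]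
    generalize S.toRight = T at hSB
    induction T using Finset.induction_on with
    | empty => simpa using hx.isFilterReg hSA hj hjS
    | insert k T hk ih =>
      rw [Finset.insert_subset_iff] at hSB
      rw [spanOn_insert, ← sup_assoc]
      refine (ih hSB.2).sup_smul_top_comm ?_
      rw [sup_right_comm, ← spanOn_insert]
      exact hy _ T hSB.2 k hSB.1 hk
  · exact hy _ _ hSB k (Finset.inr_mem_disjSum.1 hj) fun h => hjS (Finset.mem_toRight.1 h)

theorem isFilterReg_of_forall_associatedPrimes {z : R}
    (h : ∀ P ∈ associatedPrimes R (M ⧸ L), ¬ I ≤ P → z ∉ P) : IsFilterReg I L z := by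
  intro m hm
  have hann (r : R) : r ∈ Module.annihilator R (Submodule.span R {L.mkQ m}) ↔ r • m ∈ L := by
    rw [← Submodule.annihilator, Submodule.mem_annihilator_span_singleton, ← map_smul,
      Submodule.mkQ_apply, Submodule.Quotient.mk_eq_zero]
  have hle : I ≤ (Module.annihilator R (Submodule.span R {L.mkQ m})).radical := by
    rw [← Ideal.sInf_minimalPrimes]
    refine le_sInf fun P hP => ?_
    have hPass : P ∈ associatedPrimes R (M ⧸ L) :=
      associatedPrimes.subset_of_injective (Submodule.injective_subtype _)
        (Module.associatedPrimes.minimalPrimes_annihilator_subset_associatedPrimes R _ hP)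
    by_contra hIP
    exact h P hPass hIP (hP.1.2 ((hann z).2 hm))
  obtain ⟨t, ht⟩ := Ideal.exists_pow_le_of_le_radical_of_fg hle (IsNoetherian.noetherian I)
  exact ⟨t, fun b hb => (hann b).1 (ht hb)⟩

theorem IsUncondWeakOn.of_union [DecidableEq ι] (hW : IsUncondWeakOn M I x n A)
    (hF : IsFilterRegOn I (⊥ : Submodule R M) x (B ∪ A)) (hA : Ideal.span (x '' A) = I)
    (hB : Ideal.span (x '' B) = I) (hn : n ≤ A.card) : IsUncondWeakOn M I x n B :=
  (hW.union hF hA (fun j hj => hB ▸ Ideal.subset_span ⟨j, hj, rfl⟩) hn).mono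
    Finset.subset_union_left

theorem isUncondWeakOn_iff_of_sumElim [Fintype ι] [Fintype κ] {y : κ → R}
    (hF : IsFilterRegOn I (⊥ : Submodule R M) (Sum.elim x y) (Finset.univ.disjSum Finset.univ))
    (hx : Ideal.span (Set.range x) = I) (hy : Ideal.span (Set.range y) = I)
    (hnx : n ≤ Fintype.card ι) (hny : n ≤ Fintype.card κ) :
    IsUncondWeakOn M I x n Finset.univ ↔ IsUncondWeakOn M I y n Finset.univ := by
  classical
  have hx' : Ideal.span (Sum.elim x y '' (Finset.univ.map .inl : Finset (ι ⊕ κ))) = I := by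
    simpa [← Set.range_comp] using hx
  have hy' : Ideal.span (Sum.elim x y '' (Finset.univ.map .inr : Finset (ι ⊕ κ))) = I := by
    simpa [← Set.range_comp] using hy
  rw [← Finset.map_inl_disjUnion_map_inr, Finset.disjUnion_eq_union] at hF
  have hF' := hF
  rw [Finset.union_comm] at hF'
  rw [← Sum.elim_comp_inl x y, ← Sum.elim_comp_inr x y]
  refine (isUncondWeakOn_map .inl).symm.trans (Iff.trans ⟨fun hW => ?_, fun hW => ?_⟩
    (isUncondWeakOn_map .inr))
  · exact hW.of_union hF' hx' hy' (by simpa using hnx)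
  · exact hW.of_union hF hy' hx' (by simpa using hny)

variable [Module.Finite R M]

theorem exists_add_isFilterReg (c : R) (J : Ideal R) (hcJ : Ideal.span {c} ⊔ J = I)
    {𝓛 : Set (Submodule R M)} (h𝓛 : 𝓛.Finite) : ∃ j ∈ J, ∀ L ∈ 𝓛, IsFilterReg I L (c + j) := by
  classical
  have hfin : (⋃ L ∈ 𝓛, associatedPrimes R (M ⧸ L)).Finite :=
    h𝓛.biUnion fun L _ => associatedPrimes.finite R (M ⧸ L)
  have hmem (P : Ideal R) : P ∈ hfin.toFinset.filter (fun P => ¬ I ≤ P) ↔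
      (∃ L ∈ 𝓛, P ∈ associatedPrimes R (M ⧸ L)) ∧ ¬ I ≤ P := by simp
  obtain ⟨j, hj, hjP⟩ := exists_add_notMem_of_forall_prime c J
    (hfin.toFinset.filter fun P => ¬ I ≤ P)
    (fun P hP => by obtain ⟨⟨L, _, hPL⟩, _⟩ := (hmem P).1 hP; exact hPL.1)
    (fun P hP => hcJ ▸ ((hmem P).1 hP).2)
  exact ⟨j, hj, fun L hL => isFilterReg_of_forall_associatedPrimes fun P hP hIP =>
    hjP P ((hmem P).2 ⟨⟨L, hL, hP⟩, hIP⟩)⟩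

theorem exists_span_eq_isFilterRegOn [Finite κ] {c : κ → R}
    (hc : Ideal.span (Set.range c) = I) {𝓛 : Set (Submodule R M)} (h𝓛 : 𝓛.Finite)
    (T : Finset κ) :
    ∃ z : κ → R, Ideal.span (Set.range z) = I ∧ ∀ L ∈ 𝓛, IsFilterRegOn I L z T := by
  classical
  have := Fintype.ofFinite κ
  induction T using Finset.induction_on with
  | empty => exact ⟨c, hc, fun L _ S _ j hj => absurd hj (Finset.notMem_empty j)⟩
  | insert k T hk ih =>
    obtain ⟨z, hz, hzT⟩ := ih
    have hspan : Ideal.span {z k} ⊔ Ideal.span (z '' {k}ᶜ) = I := by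
      rw [← Ideal.span_union, ← Set.image_singleton, ← Set.image_union, Set.union_compl_self,
        Set.image_univ, hz]
    obtain ⟨j, hj, hjreg⟩ := exists_add_isFilterReg (z k) _ hspan
      (h𝓛.image2 (fun L S => L ⊔ spanOn M z S) (Set.finite_univ (α := Finset κ)))
    have hne : ∀ i ∈ T, z i = Function.update z k (z k + j) i := fun i hi =>
      (Function.update_of_ne (ne_of_mem_of_not_mem hi hk) _ _).symm
    refine ⟨Function.update z k (z k + j), (span_range_update_add z k hj).trans hz,
      fun L hL => ((hzT L hL).congr hne).insert fun S hS => ?_⟩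
    rw [Function.update_self, ← spanOn_congr fun i hi => hne i (hS hi)]
    exact hjreg _ ⟨L, hL, S, trivial, rfl⟩

theorem exists_isFilterRegOn_univ (I : Ideal R) (M : Type*) [AddCommGroup M] [Module R M]
    [Module.Finite R M] (n : ℕ) : ∃ (s : ℕ) (x : Fin s → R), n ≤ s ∧
      Ideal.span (Set.range x) = I ∧
      IsFilterRegOn I (⊥ : Submodule R M) x Finset.univ := by
  obtain ⟨r, c, hc⟩ := Submodule.fg_iff_exists_fin_generating_family.1
    (IsNoetherian.noetherian I : I.FG)
  have hc₀ : Ideal.span (Set.range (Fin.append c (0 : Fin n → R))) = I := by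
    refine le_antisymm (Ideal.span_le.2 ?_) ?_
    · rintro _ ⟨i, rfl⟩
      induction i using Fin.addCases with
      | left i => simpa using hc ▸ Ideal.subset_span (Set.mem_range_self i)
      | right i => simp
    · rw [← hc]
      exact Ideal.span_mono (Set.range_subset_iff.2 fun i => ⟨Fin.castAdd n i, by simp⟩)
  obtain ⟨z, hz, hzF⟩ := exists_span_eq_isFilterRegOn (M := M) hc₀
    (Set.finite_singleton ⊥) Finset.univ
  exact ⟨r + n, z, Nat.le_add_left n r, hz, hzF ⊥ rfl⟩

/-- Two generating families of `I` are compared through a third one, filter regular relative to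
both of them: elements are exchanged one at a time inside the union of two families. -/
theorem IsUncondWeakOn.of_isFilterRegOn [Fintype ι] [Fintype κ] {y : κ → R}
    (hW : IsUncondWeakOn M I x n Finset.univ)
    (hx : IsFilterRegOn I (⊥ : Submodule R M) x Finset.univ) (hxI : Ideal.span (Set.range x) = I)
    (hy : IsFilterRegOn I (⊥ : Submodule R M) y Finset.univ) (hyI : Ideal.span (Set.range y) = I)
    (hnx : n ≤ Fintype.card ι) (hny : n ≤ Fintype.card κ) :
    IsUncondWeakOn M I y n Finset.univ := by
  obtain ⟨z, hzI, hz⟩ := exists_span_eq_isFilterRegOn hxI (Set.toFinite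
    (Set.range (fun S : Finset ι => spanOn M x S) ∪ Set.range fun S : Finset κ => spanOn M y S))
    Finset.univ
  have hxz := hx.sumElim fun S => hz _ (Or.inl ⟨S, rfl⟩)
  have hyz := hy.sumElim fun S => hz _ (Or.inr ⟨S, rfl⟩)
  exact (isUncondWeakOn_iff_of_sumElim hyz hyI hzI hny hnx).2
    ((isUncondWeakOn_iff_of_sumElim hxz hxI hzI hnx hnx).1 hW)

end GenericGenerators

section KoszulCochains

variable {R M ι : Type*} [CommRing R] [AddCommGroup M] [Module R M]
  {i j : ι} {t : Finset ι} {d : ℤ} {F : Finset ι → M} {L : Submodule R M}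

/-- The morphism from the Koszul complex of the family `x_j ^ u` to that of `x_j ^ (u + e)`. -/
def koszulT (x : ι → R) (e : ℕ) : (Finset ι → M) →ₗ[R] (Finset ι → M) where
  toFun F t := (∏ j ∈ t, x j) ^ e • F t
  map_add' F G := by
    funext t
    simp [smul_add]
  map_smul' r F := by
    funext t
    simp [smul_comm r]

theorem koszulT_apply (x : ι → R) (e : ℕ) (F : Finset ι → M) (t : Finset ι) :
    koszulT x e F t = (∏ j ∈ t, x j) ^ e • F t := rfl

theorem koszulT_zero (x : ι → R) (F : Finset ι → M) : koszulT x 0 F = F := by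
  funext t
  simp [koszulT_apply]

theorem koszulT_koszulT (x : ι → R) (e e' : ℕ) (F : Finset ι → M) :
    koszulT x e (koszulT x e' F) = koszulT x (e + e') F := by
  funext t
  simp only [koszulT_apply, smul_smul, pow_add]

variable (ι) in
/-- The Koszul cochains with values in the submodule `L` of `M`. -/
def valuedIn (L : Submodule R M) : Submodule R (Finset ι → M) :=
  Submodule.pi Set.univ fun _ => L

theorem mem_valuedIn : F ∈ valuedIn ι L ↔ ∀ t, F t ∈ L := by
  simp [valuedIn, Submodule.mem_pi]

@[simp]
theorem valuedIn_bot : valuedIn ι (⊥ : Submodule R M) = ⊥ := Submodule.pi_univ_bot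

theorem valuedIn_mono {L' : Submodule R M} (h : L ≤ L') : valuedIn ι L ≤ valuedIn ι L' :=
  fun _ hF => mem_valuedIn.2 fun t => h (mem_valuedIn.1 hF t)

theorem smul_mem_valuedIn_sup (L : Submodule R M) (r : R) (F : Finset ι → M) :
    r • F ∈ valuedIn ι (L ⊔ r • (⊤ : Submodule R M)) :=
  mem_valuedIn.2 fun t => smul_mem_sup_smul_top L r (F t)

theorem koszulT_mem_valuedIn (x : ι → R) (e : ℕ) (hF : F ∈ valuedIn ι L) :
    koszulT x e F ∈ valuedIn ι L :=
  mem_valuedIn.2 fun _ => L.smul_mem _ (mem_valuedIn.1 hF _)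

variable (R M ι) in
/-- The Koszul cochains of degree `d`. Negative degrees are allowed, so that the cochains whose
coboundaries have degree `d` are those of degree `d - 1` for all `d`. -/
def homogeneous (d : ℤ) : Submodule R (Finset ι → M) where
  carrier := {F | ∀ t : Finset ι, (t.card : ℤ) ≠ d → F t = 0}
  zero_mem' _ _ := rfl
  add_mem' hF hG t ht := by rw [Pi.add_apply, hF t ht, hG t ht, add_zero]
  smul_mem' r F hF t ht := by rw [Pi.smul_apply, hF t ht, smul_zero]

theorem koszulT_mem_homogeneous (x : ι → R) (e : ℕ) (hF : F ∈ homogeneous R M ι d) :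
    koszulT x e F ∈ homogeneous R M ι d := by
  intro t ht
  rw [koszulT_apply, hF t ht, smul_zero]

theorem exists_homogeneous_sub_smul_mem {r : R} (hF : F ∈ homogeneous R M ι d)
    (hFr : F ∈ valuedIn ι (L ⊔ r • (⊤ : Submodule R M))) :
    ∃ G ∈ homogeneous R M ι d, F - r • G ∈ valuedIn ι L := by
  choose G hG using fun t => mem_sup_smul_top.1 (mem_valuedIn.1 hFr t)
  refine ⟨fun t => if (t.card : ℤ) = d then G t else 0, fun t ht => if_neg ht,
    mem_valuedIn.2 fun t => ?_⟩
  by_cases ht : (t.card : ℤ) = d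
  · simpa [ht] using hG t
  · simp [ht, hF t ht]

variable [LinearOrder ι]

variable (R) in
/-- The sign of `e_j ∧ e_{t ∖ j}` relative to `e_t` in the exterior algebra. -/
def koszulSign (j : ι) (t : Finset ι) : R :=
  (-1) ^ (t.filter fun a => a < j).card

theorem koszulSign_mul_self (j : ι) (t : Finset ι) : koszulSign R j t * koszulSign R j t = 1 := by
  rw [koszulSign, ← mul_pow, neg_one_mul, neg_neg, one_pow]

theorem koszulSign_singleton (j : ι) : koszulSign R j {j} = 1 := by
  simp [koszulSign, Finset.filter_singleton]

theorem koszulSign_insert_of_lt (h : i < j) (hi : i ∉ t) :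
    koszulSign R j (insert i t) = -koszulSign R j t := by
  rw [koszulSign, Finset.filter_insert, if_pos h, Finset.card_insert_of_notMem (by simp [hi]),
    pow_succ, mul_neg_one, koszulSign]

theorem koszulSign_insert_of_le (h : j ≤ i) : koszulSign R j (insert i t) = koszulSign R j t := by
  rw [koszulSign, Finset.filter_insert, if_neg h.not_gt, koszulSign]

theorem koszulSign_erase_self (j : ι) (t : Finset ι) :
    koszulSign R j (t.erase j) = koszulSign R j t := by
  by_cases hj : j ∈ t
  · conv_rhs => rw [← Finset.insert_erase hj, koszulSign_insert_of_le le_rfl]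
  · rw [Finset.erase_eq_of_notMem hj]

theorem koszulSign_mul_koszulSign_insert (hij : i ≠ j) (hi : i ∈ t) (hj : j ∉ t) :
    koszulSign R j t * koszulSign R i (insert j t)
      = -(koszulSign R i t * koszulSign R j (t.erase i)) := by
  obtain ⟨t, hit, rfl⟩ : ∃ t', i ∉ t' ∧ insert i t' = t :=
    ⟨t.erase i, Finset.notMem_erase i t, Finset.insert_erase hi⟩
  rw [Finset.erase_insert hit]
  rcases lt_or_gt_of_ne hij with h | h
  · rw [koszulSign_insert_of_lt h hit, koszulSign_insert_of_le h.le]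
    ring
  · rw [koszulSign_insert_of_le h.le, koszulSign_insert_of_lt h hj]
    ring

theorem koszulSign_mul_koszulSign_erase (hij : i ≠ j) (hi : i ∈ t) (hj : j ∈ t) :
    koszulSign R j t * koszulSign R i (t.erase j)
      = -(koszulSign R i t * koszulSign R j (t.erase i)) := by
  have h := koszulSign_mul_koszulSign_insert (R := R) hij (Finset.mem_erase.2 ⟨hij, hi⟩)
    (Finset.notMem_erase j t)
  rw [Finset.insert_erase hj, koszulSign_erase_self, Finset.erase_right_comm,
    koszulSign_erase_self] at h
  linear_combination koszulSign R i t * koszulSign R i (t.erase j) * h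
    - koszulSign R j t * koszulSign R i (t.erase j) * koszulSign_mul_self (R := R) i t
    - koszulSign R i t * koszulSign R j (t.erase i) * koszulSign_mul_self (R := R) i (t.erase j)

/-- The differential of the total Koszul cochain complex of `M` on the family `y`. A cochain is a
function `F : Finset ι → M`, whose value at `t` is its component of degree `t.card` along `e_t`. -/
def koszulD (y : ι → R) : (Finset ι → M) →ₗ[R] (Finset ι → M) where
  toFun F t := ∑ j ∈ t, (koszulSign R j t * y j) • F (t.erase j)
  map_add' F G := by
    funext t
    simp [smul_add, Finset.sum_add_distrib]
  map_smul' r F := by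
    funext t
    simp [Finset.smul_sum, smul_comm r]

theorem koszulD_apply (y : ι → R) (F : Finset ι → M) (t : Finset ι) :
    koszulD y F t = ∑ j ∈ t, (koszulSign R j t * y j) • F (t.erase j) := rfl

variable (R) in
/-- Contraction of Koszul cochains along the basis vector `e_j`. -/
def koszulC (j : ι) : (Finset ι → M) →ₗ[R] (Finset ι → M) where
  toFun F t := if j ∈ t then 0 else koszulSign R j t • F (insert j t)
  map_add' F G := by
    funext t
    by_cases hj : j ∈ t <;> simp [hj]
  map_smul' r F := by
    funext t
    by_cases hj : j ∈ t <;> simp [hj, smul_comm r]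

theorem koszulC_of_mem (hj : j ∈ t) (F : Finset ι → M) : koszulC R j F t = 0 := if_pos hj

theorem koszulC_of_notMem (hj : j ∉ t) (F : Finset ι → M) :
    koszulC R j F t = koszulSign R j t • F (insert j t) := if_neg hj

theorem koszulD_koszulD (y : ι → R) (F : Finset ι → M) : koszulD y (koszulD y F) = 0 := by
  funext t
  simp only [koszulD_apply, Finset.smul_sum, smul_smul, Pi.zero_apply]
  rw [Finset.sum_sigma']
  refine Finset.sum_involution (fun p _ => ⟨p.2, p.1⟩) ?_ ?_ ?_ fun _ _ => rfl
  · rintro ⟨j, i⟩ hp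
    obtain ⟨hj, hij, hi⟩ : j ∈ t ∧ i ≠ j ∧ i ∈ t := by simpa using hp
    rw [Finset.erase_right_comm, ← add_smul]
    convert zero_smul R _
    linear_combination (y i * y j) * koszulSign_mul_koszulSign_erase (R := R) hij hi hj
  · rintro ⟨j, i⟩ hp _ heq
    simp only [Finset.mem_sigma, Finset.mem_erase, Sigma.mk.injEq] at hp heq
    exact hp.2.1 heq.1
  · rintro ⟨j, i⟩ hp
    simp only [Finset.mem_sigma, Finset.mem_erase] at hp ⊢
    exact ⟨hp.2.2, hp.2.1.symm, hp.1⟩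

theorem koszulD_koszulC_of_mem (hj : j ∈ t) (y : ι → R) (F : Finset ι → M) :
    koszulD y (koszulC R j F) t = y j • F t := by
  rw [koszulD_apply, Finset.sum_eq_single_of_mem j hj fun i _ hij => by
    rw [koszulC_of_mem (Finset.mem_erase.2 ⟨hij.symm, hj⟩), smul_zero]]
  rw [koszulC_of_notMem (Finset.notMem_erase j t), Finset.insert_erase hj, koszulSign_erase_self,
    smul_smul, mul_right_comm, koszulSign_mul_self, one_mul]

theorem koszulD_koszulC_of_notMem (hj : j ∉ t) (y : ι → R) (F : Finset ι → M) :
    koszulD y (koszulC R j F) t + koszulSign R j t • koszulD y F (insert j t) = y j • F t := by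
  have hself : koszulSign R j t • (koszulSign R j (insert j t) * y j) • F ((insert j t).erase j)
      = y j • F t := by
    rw [koszulSign_insert_of_le le_rfl, Finset.erase_insert hj, smul_smul, ← mul_assoc,
      koszulSign_mul_self, one_mul]
  rw [koszulD_apply, koszulD_apply, Finset.sum_insert hj, smul_add, hself, add_left_comm,
    Finset.smul_sum, ← Finset.sum_add_distrib, Finset.sum_eq_zero, add_zero]
  intro i hi
  have hij : i ≠ j := ne_of_mem_of_not_mem hi hj
  rw [koszulC_of_notMem fun h => hj (Finset.mem_of_mem_erase h),
    Finset.erase_insert_of_ne hij.symm, smul_smul, smul_smul, ← add_smul]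
  convert zero_smul R _
  linear_combination y i * koszulSign_mul_koszulSign_insert (R := R) hij hi hj

theorem koszulD_koszulC (y : ι → R) (j : ι) (F : Finset ι → M) :
    koszulD y (koszulC R j F) = y j • F - koszulC R j (koszulD y F) := by
  funext t
  rw [Pi.sub_apply, Pi.smul_apply, eq_sub_iff_add_eq]
  by_cases hj : j ∈ t
  · rw [koszulC_of_mem hj, add_zero, koszulD_koszulC_of_mem hj]
  · rw [koszulC_of_notMem hj, koszulD_koszulC_of_notMem hj]

theorem koszulD_koszulT (x : ι → R) {u e v : ℕ} (h : u + e = v) (F : Finset ι → M) :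
    koszulD (fun j => x j ^ v) (koszulT x e F) = koszulT x e (koszulD (fun j => x j ^ u) F) := by
  subst h
  funext t
  simp only [koszulD_apply, koszulT_apply, Finset.smul_sum, smul_smul]
  refine Finset.sum_congr rfl fun j hj => ?_
  rw [← Finset.mul_prod_erase t x hj]
  congr 1
  ring

theorem koszulD_apply_mem_spanOn (y : ι → R) (F : Finset ι → M) (t : Finset ι) :
    koszulD y F t ∈ spanOn M y t :=
  Submodule.sum_mem _ fun j hj => by
    rw [mul_comm, mul_smul]
    exact smul_mem_spanOn y hj _

theorem koszulD_mem_valuedIn (y : ι → R) (hF : F ∈ valuedIn ι L) :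
    koszulD y F ∈ valuedIn ι L :=
  mem_valuedIn.2 fun _ => Submodule.sum_mem _ fun _ _ => L.smul_mem _ (mem_valuedIn.1 hF _)

theorem koszulC_mem_valuedIn (j : ι) (hF : F ∈ valuedIn ι L) :
    koszulC R j F ∈ valuedIn ι L := by
  refine mem_valuedIn.2 fun t => ?_
  by_cases hj : j ∈ t
  · rw [koszulC_of_mem hj]
    exact L.zero_mem
  · rw [koszulC_of_notMem hj]
    exact L.smul_mem _ (mem_valuedIn.1 hF _)

theorem koszulD_mem_homogeneous (y : ι → R) (hF : F ∈ homogeneous R M ι d) :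
    koszulD y F ∈ homogeneous R M ι (d + 1) := by
  refine fun t ht => Finset.sum_eq_zero fun j hj => ?_
  have := Finset.card_erase_add_one hj
  rw [hF _ (by lia), smul_zero]

theorem koszulC_mem_homogeneous (j : ι) (hF : F ∈ homogeneous R M ι (d + 1)) :
    koszulC R j F ∈ homogeneous R M ι d := by
  intro t ht
  by_cases hj : j ∈ t
  · exact koszulC_of_mem hj F
  · rw [koszulC_of_notMem hj,
      hF _ (by rw [Finset.card_insert_of_notMem hj]; lia), smul_zero]

end KoszulCochains

section WeakToSurjective

variable {R M ι : Type*} [CommRing R] [AddCommGroup M] [Module R M]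
  {I : Ideal R} {L : Submodule R M} {x : ι → R} {j : ι} {F k : Finset ι → M} {i u e : ℕ}

theorem KillsTorsion.koszulT_one_mem_valuedIn (hL : KillsTorsion I L) (hxI : ∀ j, x j ∈ I) {d : ℤ}
    (hd : d ≠ 0) (hF : F ∈ homogeneous R M ι d) (hFL : F ∈ valuedIn ι (idealSat I L)) :
    koszulT x 1 F ∈ valuedIn ι L := by
  classical
  refine mem_valuedIn.2 fun t => ?_
  rw [koszulT_apply, pow_one]
  rcases t.eq_empty_or_nonempty with rfl | ⟨j, hj⟩
  · rw [hF ∅ (by simpa using hd.symm), smul_zero]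
    exact L.zero_mem
  · rw [← Finset.mul_prod_erase t x hj]
    exact hL _ (mem_valuedIn.1 hFL t) _ (I.mul_mem_right _ (hxI j))

variable [IsNoetherianRing R]

theorem IsFilterReg.mem_valuedIn_idealSat_of_pow_smul {z : R} (hz : IsFilterReg I L z) (u : ℕ)
    (hF : z ^ u • F ∈ valuedIn ι L) : F ∈ valuedIn ι (idealSat I L) :=
  mem_valuedIn.2 fun t => hz.pow u _ (mem_valuedIn.1 hF t)

variable [LinearOrder ι]

theorem IsFilterReg.mem_valuedIn_idealSat_of_homogeneous_zero (hj : IsFilterReg I L (x j))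
    (hF : F ∈ homogeneous R M ι 0) (hD : koszulD (fun j => x j ^ u) F ∈ valuedIn ι L) :
    F ∈ valuedIn ι (idealSat I L) := by
  refine mem_valuedIn.2 fun t => ?_
  rcases t.eq_empty_or_nonempty with rfl | ht
  · refine hj.pow u _ ?_
    simpa [koszulD_apply, koszulSign_singleton] using mem_valuedIn.1 hD {j}
  · rw [hF t (by simpa using ht.ne_empty)]
    exact Submodule.zero_mem _

theorem exists_smul_koszulT_sub_koszulD_mem_of_sup (hL : KillsTorsion I L)
    (hj : IsFilterReg I L (x j)) (hxI : ∀ j, x j ∈ I) {b : R}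
    (hF : F ∈ homogeneous R M ι (i + 1)) (hD : koszulD (fun j => x j ^ u) F ∈ valuedIn ι L)
    (hk : k ∈ homogeneous R M ι (i - 1))
    (hbk : b • koszulT x e (koszulC R j F) - koszulD (fun j => x j ^ (u + e)) k
      ∈ valuedIn ι (L ⊔ x j ^ u • (⊤ : Submodule R M))) :
    ∃ l ∈ homogeneous R M ι i,
      b • koszulT x (e + 1) F - koszulD (fun j => x j ^ (u + (e + 1))) l ∈ valuedIn ι L := by
  have hDk : koszulD (fun j => x j ^ (u + e)) k ∈ homogeneous R M ι i := by
    simpa using koszulD_mem_homogeneous (fun j => x j ^ (u + e)) hk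
  obtain ⟨l, hl, hbl⟩ := exists_homogeneous_sub_smul_mem (sub_mem (Submodule.smul_mem _ b
    (koszulT_mem_homogeneous x e (koszulC_mem_homogeneous j hF))) hDk) hbk
  refine ⟨koszulT x 1 l, koszulT_mem_homogeneous x 1 hl, ?_⟩
  have hsat : b • koszulT x e F - koszulD (fun j => x j ^ (u + e)) l
      ∈ valuedIn ι (idealSat I L) := by
    refine hj.mem_valuedIn_idealSat_of_pow_smul u ?_
    have hDbl := koszulD_mem_valuedIn (fun j => x j ^ (u + e)) hbl
    rw [map_sub, map_sub, koszulD_koszulD, map_smul, map_smul, koszulD_koszulT x rfl,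
      koszulD_koszulC, map_sub, map_smul] at hDbl
    convert add_mem hDbl (Submodule.smul_mem _ b
      (koszulT_mem_valuedIn x e (koszulC_mem_valuedIn j hD))) using 1
    module
  have hT := hL.koszulT_one_mem_valuedIn hxI (by lia)
    (sub_mem (Submodule.smul_mem _ b (koszulT_mem_homogeneous x e hF))
      (koszulD_mem_homogeneous _ hl)) hsat
  rw [map_sub, map_smul, koszulT_koszulT, add_comm 1 e] at hT
  rwa [koszulD_koszulT x (add_assoc u e 1)]

theorem exists_koszulT_sub_koszulT_sub_koszulD_mem_of_sup (hL : KillsTorsion I L)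
    (hj : IsFilterReg I L (x j)) (hxI : ∀ j, x j ∈ I) {e' : ℕ} {c l : Finset ι → M}
    (hF : F ∈ homogeneous R M ι (i + 1)) (hk : k ∈ homogeneous R M ι i)
    (hFk : x j • koszulT x e F - koszulD (fun j => x j ^ (u + 1 + e)) k ∈ valuedIn ι L)
    (hc : c ∈ homogeneous R M ι i)
    (hDc : koszulD x c ∈ valuedIn ι (L ⊔ x j • (⊤ : Submodule R M)))
    (hl : l ∈ homogeneous R M ι (i - 1))
    (hkc : koszulT x e' k - koszulT x (u + e + e') c
        - koszulD (fun j => x j ^ (u + e + 1 + e')) l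
      ∈ valuedIn ι (L ⊔ x j • (⊤ : Submodule R M))) :
    ∃ g ∈ homogeneous R M ι (i + 1), koszulD x g ∈ valuedIn ι (idealSat I L) ∧
      ∃ w ∈ homogeneous R M ι i,
        koszulT x (e + e' + 1) F - koszulT x (u + (e + e' + 1)) g
          - koszulD (fun j => x j ^ (u + 1 + (e + e' + 1))) w ∈ valuedIn ι L := by
  have hDl : koszulD (fun j => x j ^ (u + e + 1 + e')) l ∈ homogeneous R M ι i := by
    simpa using koszulD_mem_homogeneous _ hl
  obtain ⟨w, hw, hkw⟩ := exists_homogeneous_sub_smul_mem (sub_mem (sub_mem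
    (koszulT_mem_homogeneous x _ hk) (koszulT_mem_homogeneous x _ hc)) hDl) hkc
  obtain ⟨g, hg, hcg⟩ := exists_homogeneous_sub_smul_mem (koszulD_mem_homogeneous x hc) hDc
  have hDg : koszulD x g ∈ valuedIn ι (idealSat I L) := by
    refine hj.mem_valuedIn_idealSat_of_pow_smul 1 ?_
    simpa [koszulD_koszulD] using koszulD_mem_valuedIn x hcg
  have hsat : koszulT x (e' + e) F - koszulT x (u + e + e') g
      - koszulD (fun j => x j ^ (u + e + 1 + e')) w ∈ valuedIn ι (idealSat I L) := by
    refine hj.mem_valuedIn_idealSat_of_pow_smul 1 ?_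
    have hDkw := koszulD_mem_valuedIn (fun j => x j ^ (u + e + 1 + e')) hkw
    rw [map_sub, map_sub, map_sub, koszulD_koszulD, map_smul, koszulD_koszulT x rfl,
      koszulD_koszulT x (show 1 + (u + e + e') = u + e + 1 + e' by lia)] at hDkw
    have hTFk := koszulT_mem_valuedIn x e' hFk
    rw [add_right_comm u 1 e, map_sub, map_smul, koszulT_koszulT] at hTFk
    have hTcg := koszulT_mem_valuedIn x (u + e + e') hcg
    rw [map_sub, map_smul] at hTcg
    simp only [pow_one] at hDkw ⊢
    convert add_mem (add_mem hDkw hTcg) hTFk using 1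
    module
  refine ⟨g, hg, hDg, koszulT x 1 w, koszulT_mem_homogeneous x 1 hw, ?_⟩
  have hT := hL.koszulT_one_mem_valuedIn hxI (by lia) (sub_mem (sub_mem
    (koszulT_mem_homogeneous x _ hF) (koszulT_mem_homogeneous x _ hg))
    (koszulD_mem_homogeneous _ hw)) hsat
  rw [map_sub, map_sub, koszulT_koszulT, koszulT_koszulT] at hT
  rw [koszulD_koszulT x (show u + e + 1 + e' + 1 = u + 1 + (e + e' + 1) by lia)]
  convert hT using 4 <;> lia

/-- The canonical map from `H^i(x; M / L)` to the direct limit of the Koszul cohomology modules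
of the powers of `x` is surjective, expressed through cochains with values in `M`. -/
def IsKoszulStable (L : Submodule R M) (x : ι → R) (i : ℕ) : Prop :=
  ∀ u, ∀ F ∈ homogeneous R M ι i, koszulD (fun j => x j ^ (u + 1)) F ∈ valuedIn ι L →
    ∃ e, ∃ g ∈ homogeneous R M ι i, koszulD x g ∈ valuedIn ι L ∧
      ∃ k ∈ homogeneous R M ι (i - 1),
        koszulT x e F - koszulT x (u + e) g - koszulD (fun j => x j ^ (u + 1 + e)) k
          ∈ valuedIn ι L

theorem isKoszulStable_zero (hL : KillsTorsion I L) (hj : IsFilterReg I L (x j))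
    (hxI : ∀ j, x j ∈ I) : IsKoszulStable L x 0 := by
  intro u F hF hD
  have hsat := hj.mem_valuedIn_idealSat_of_homogeneous_zero (by simpa using hF) hD
  refine ⟨0, F, hF, mem_valuedIn.2 fun t => Submodule.sum_mem _ fun i _ =>
    hL _ (mem_valuedIn.1 hsat _) _ (I.mul_mem_left _ (hxI i)), 0, zero_mem _,
    mem_valuedIn.2 fun t => ?_⟩
  rcases t.eq_empty_or_nonempty with rfl | ht
  · simp [koszulT_apply]
  · simp [koszulT_apply, hF t (by simpa using ht.ne_empty)]

variable [Fintype ι] {n : ℕ} {S T : Finset ι}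

theorem IsUncondWeakOn.exists_smul_koszulT_sub_koszulD_mem
    (hW : IsUncondWeakOn M I x n Finset.univ)
    (hreg : IsFilterRegOn I (⊥ : Submodule R M) x Finset.univ) (hxI : ∀ j, x j ∈ I)
    (hn : n ≤ Fintype.card ι) (α : ι → ℕ) (hS : S.card + i < n)
    (hF : F ∈ homogeneous R M ι i)
    (hD : koszulD (fun j => x j ^ u) F ∈ valuedIn ι (spanOn M (fun j => x j ^ α j) S))
    {b : R} (hb : b ∈ I) :
    ∃ e : ℕ, ∃ k ∈ homogeneous R M ι (i - 1),
      b • koszulT x e F - koszulD (fun j => x j ^ (u + e)) k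
        ∈ valuedIn ι (spanOn M (fun j => x j ^ α j) S) := by
  induction i generalizing S α F with
  | zero =>
    obtain ⟨j, hj⟩ := exists_notMem_of_card_lt (S := S) (by lia)
    have hsat := (hreg.isFilterReg_pow α (Finset.subset_univ S) (Finset.mem_univ j)
      hj).mem_valuedIn_idealSat_of_homogeneous_zero (by simpa using hF) hD
    refine ⟨0, 0, zero_mem _, mem_valuedIn.2 fun t => ?_⟩
    simpa [koszulT_zero] using
      hW S (Finset.subset_univ S) (by lia) α _ (mem_valuedIn.1 hsat t) b hb
  | succ i ih =>
    obtain ⟨j, hj⟩ := exists_notMem_of_card_lt (S := S) (by lia)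
    push_cast at hF
    have hDC : koszulD (fun j => x j ^ u) (koszulC R j F) ∈ valuedIn ι
        (spanOn M (fun j => x j ^ α j) S ⊔ x j ^ u • (⊤ : Submodule R M)) := by
      rw [koszulD_koszulC]
      exact sub_mem (smul_mem_valuedIn_sup _ _ F)
        (valuedIn_mono le_sup_left (koszulC_mem_valuedIn j hD))
    rw [← spanOn_pow_update_insert x α hj u] at hDC
    obtain ⟨e, k, hk, hek⟩ := ih (Function.update α j u)
      (by rw [Finset.card_insert_of_notMem hj]; lia) (koszulC_mem_homogeneous j hF) hDC
    rw [spanOn_pow_update_insert x α hj u] at hek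
    obtain ⟨l, hl, hel⟩ := exists_smul_koszulT_sub_koszulD_mem_of_sup
      (hW S (Finset.subset_univ S) (by lia) α)
      (hreg.isFilterReg_pow α (Finset.subset_univ S) (Finset.mem_univ j) hj) hxI hF hD hk hek
    exact ⟨e + 1, l, by simpa using hl, hel⟩

theorem IsUncondWeakOn.mem_spanOn_of_mem_idealSat (hW : IsUncondWeakOn M I x n Finset.univ)
    (hreg : IsFilterRegOn I (⊥ : Submodule R M) x Finset.univ) (hxI : ∀ j, x j ∈ I)
    (hST : (S ∪ T).card ≤ n) {m : M} (hm : m ∈ idealSat I (spanOn M x S))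
    (hmT : m ∈ spanOn M x (S ∪ T)) : m ∈ spanOn M x S := by
  induction T using Finset.induction_on with
  | empty => simpa using hmT
  | insert j T _ ih =>
    rw [Finset.union_insert] at hST hmT
    by_cases hj : j ∈ S ∪ T
    · rw [Finset.insert_eq_of_mem hj] at hST hmT
      exact ih hST hmT
    · rw [Finset.card_insert_of_notMem hj] at hST
      rw [spanOn_insert] at hmT
      exact ih (by lia) ((hW.killsTorsion (Finset.subset_univ _) hST).mem_of_mem_idealSat
        (hreg.isFilterReg (Finset.subset_univ _) (Finset.mem_univ j) hj) (hxI j)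
        (idealSat_mono (spanOn_mono x Finset.subset_union_left) hm) hmT)

theorem IsUncondWeakOn.isKoszulStable_spanOn (hW : IsUncondWeakOn M I x n Finset.univ)
    (hreg : IsFilterRegOn I (⊥ : Submodule R M) x Finset.univ) (hxI : ∀ j, x j ∈ I)
    (hn : n ≤ Fintype.card ι) (hS : S.card + i < n) : IsKoszulStable (spanOn M x S) x i := by
  induction i generalizing S with
  | zero =>
    obtain ⟨j, hj⟩ := exists_notMem_of_card_lt (S := S) (by lia)
    exact isKoszulStable_zero (hW.killsTorsion (Finset.subset_univ S) hS)
      (hreg.isFilterReg (Finset.subset_univ S) (Finset.mem_univ j) hj) hxI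
  | succ i ih =>
    obtain ⟨j, hj⟩ := exists_notMem_of_card_lt (S := S) (by lia)
    intro u F hF hD
    push_cast at hF
    obtain ⟨e, k, hk, hFk⟩ := hW.exists_smul_koszulT_sub_koszulD_mem hreg hxI hn 1 hS
      (by exact_mod_cast hF) (by simpa using hD) (hxI j)
    simp only [Pi.one_apply, pow_one] at hFk
    have hDk : koszulD (fun j => x j ^ (u + e + 1)) k ∈ valuedIn ι (spanOn M x (insert j S)) := by
      rw [spanOn_insert, add_right_comm]
      convert sub_mem (smul_mem_valuedIn_sup _ _ (koszulT x e F))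
        (valuedIn_mono le_sup_left hFk) using 1
      module
    have hki : k ∈ homogeneous R M ι i := by simpa using hk
    obtain ⟨e', c, hc, hDc, l, hl, hkc⟩ :=
      ih (by rw [Finset.card_insert_of_notMem hj]; lia) (u + e) k hki hDk
    rw [spanOn_insert] at hDc hkc
    obtain ⟨g, hg, hDg, w, hw, hgw⟩ := exists_koszulT_sub_koszulT_sub_koszulD_mem_of_sup
      (hW.killsTorsion (Finset.subset_univ S) (by lia))
      (hreg.isFilterReg (Finset.subset_univ S) (Finset.mem_univ j) hj) hxI hF hki hFk hc hDc hl hkc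
    refine ⟨e + e' + 1, g, by exact_mod_cast hg, mem_valuedIn.2 fun t => ?_, w,
      by simpa using hw, hgw⟩
    by_cases ht : (t.card : ℤ) = i + 1 + 1
    · have := Finset.card_union_le S t
      exact hW.mem_spanOn_of_mem_idealSat hreg hxI (T := t) (by lia) (mem_valuedIn.1 hDg t)
        (spanOn_mono x Finset.subset_union_right (koszulD_apply_mem_spanOn x g t))
    · rw [koszulD_mem_homogeneous x hg t ht]
      exact Submodule.zero_mem _

theorem IsUncondWeakOn.isKoszulStable (hW : IsUncondWeakOn M I x n Finset.univ)
    (hreg : IsFilterRegOn I (⊥ : Submodule R M) x Finset.univ) (hxI : ∀ j, x j ∈ I)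
    (hn : n ≤ Fintype.card ι) (hi : i < n) : IsKoszulStable (⊥ : Submodule R M) x i := by
  simpa using hW.isKoszulStable_spanOn hreg hxI hn (S := ∅) (by simpa using hi)

end WeakToSurjective

section SurjectiveToWeak

variable {R M ι : Type*} [CommRing R] [AddCommGroup M] [Module R M]
  {I : Ideal R} {L : Submodule R M} {x y : ι → R} {i j : ι} {S T : Finset ι} {m : M}
  {α : ι → ℕ} {F g c : Finset ι → M} {d : ℤ}

theorem prod_pow_smul_mem_spanOn (e : ι → ℕ) (hm : m ∈ spanOn M (fun j => x j ^ α j) S) :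
    (∏ j ∈ S, x j ^ e j) • m ∈ spanOn M (fun j => x j ^ (α j + e j)) S := by
  classical
  suffices spanOn M (fun j => x j ^ α j) S ≤ (spanOn M (fun j => x j ^ (α j + e j)) S).comap
      (LinearMap.lsmul R M (∏ j ∈ S, x j ^ e j)) from this hm
  refine spanOn_le.2 fun j hj m => ?_
  rw [Submodule.mem_comap, LinearMap.lsmul_apply, smul_smul, ← Finset.mul_prod_erase S _ hj]
  convert smul_mem_spanOn (fun j => x j ^ (α j + e j)) hj ((∏ i ∈ S.erase j, x i ^ e i) • m) using 1
  rw [smul_smul]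
  congr 1
  ring

theorem exists_koszulT_mem_valuedIn [Finite ι] (hxI : ∀ j, x j ∈ I)
    (hF : F ∈ valuedIn ι (idealSat I L)) (h0 : F ∅ = 0) : ∃ e, koszulT x e F ∈ valuedIn ι L := by
  classical
  obtain ⟨e, he⟩ := exists_pow_smul_apply_mem (mem_valuedIn.1 hF)
  refine ⟨e, mem_valuedIn.2 fun t => ?_⟩
  rw [koszulT_apply]
  rcases t.eq_empty_or_nonempty with rfl | ⟨j, hj⟩
  · simp [h0]
  · refine he _ (Ideal.pow_mem_pow ?_ e) t
    rw [← Finset.mul_prod_erase t x hj]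
    exact I.mul_mem_right _ (hxI j)

variable [LinearOrder ι]

theorem smul_mem_spanOn_of_koszulD_eq_zero (hx : Ideal.span (Set.range x) = I)
    (hg : koszulD x g = 0) (S : Finset ι) {b : R} (hb : b ∈ I) : b • g S ∈ spanOn M x S := by
  refine smul_mem_of_span_eq hx ?_ hb
  rintro _ ⟨i, rfl⟩
  by_cases hi : i ∈ S
  · exact smul_mem_spanOn x hi _
  · have hDC := koszulD_koszulC_of_notMem hi x g
    rw [hg, Pi.zero_apply, smul_zero, add_zero] at hDC
    exact hDC ▸ koszulD_apply_mem_spanOn x _ S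

theorem exists_homogeneous_smul_koszulD_mem (hj : j ∉ S) (hc : c ∈ homogeneous R M ι d)
    (hD : koszulD y c ∈ valuedIn ι (L ⊔ y j • (⊤ : Submodule R M))) :
    ∃ f ∈ homogeneous R M ι (d + 1), y j • koszulD y f ∈ valuedIn ι L ∧ f (insert j S) = c S := by
  -- The part `c₁` of `c` off `e_j` has `koszulD y c₁ ≡ y j • f` modulo `L`, where the components
  -- of `f` along the faces containing `j` are those of `e_j ∧ c₁`.
  set c₁ : Finset ι → M := fun t => if j ∈ t then 0 else c t with hc₁
  have hD_mem (t) (ht : j ∈ t) : koszulD y c₁ t = y j • koszulSign R j t • c (t.erase j) := by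
    rw [koszulD_apply, Finset.sum_eq_single_of_mem j ht fun i _ hij => by
      simp [hc₁, ht, hij.symm]]
    simp [hc₁, mul_comm, mul_smul]
  have hD_notMem (t) (ht : j ∉ t) : koszulD y c₁ t = koszulD y c t := by
    simp [koszulD_apply, hc₁, ht]
  have hD₁ : koszulD y c₁ ∈ valuedIn ι (L ⊔ y j • (⊤ : Submodule R M)) := by
    refine mem_valuedIn.2 fun t => ?_
    by_cases ht : j ∈ t
    · exact hD_mem t ht ▸ smul_mem_sup_smul_top L (y j) _
    · exact hD_notMem t ht ▸ mem_valuedIn.1 hD t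
  obtain ⟨f₀, hf₀, hDf₀⟩ := exists_homogeneous_sub_smul_mem
    (koszulD_mem_homogeneous y (d := d) fun t ht => by simp [hc₁, hc t ht]) hD₁
  set f : Finset ι → M := fun t => if j ∈ t then koszulSign R j t • c (t.erase j) else f₀ t with hf
  have hfd : f ∈ homogeneous R M ι (d + 1) := by
    intro t ht
    by_cases hjt : j ∈ t
    · have := Finset.card_erase_add_one hjt
      simp [hf, hjt, hc (t.erase j) (by lia)]
    · simp [hf, hjt, hf₀ t ht]
  have hDf : koszulD y c₁ - y j • f ∈ valuedIn ι L := by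
    refine mem_valuedIn.2 fun t => ?_
    by_cases hjt : j ∈ t
    · simp [hf, hjt, hD_mem t hjt]
    · simpa [hf, hjt] using mem_valuedIn.1 hDf₀ t
  refine ⟨koszulSign R j (insert j S) • f, Submodule.smul_mem _ _ hfd, ?_, ?_⟩
  · have := koszulD_mem_valuedIn y hDf
    rw [map_sub, koszulD_koszulD, zero_sub, map_smul, neg_mem_iff] at this
    rw [map_smul, smul_comm]
    exact Submodule.smul_mem _ _ this
  · simp [hf, smul_smul, koszulSign_mul_self, hj]

/-- The submodule generated by `⟨x_i ^ α_i : i ∈ S⟩M` and by the saturations of its submodules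
`⟨x_i ^ α_i : i ∈ S ∖ {j}⟩M` for `j ∈ S`. -/
def satSpanOn (I : Ideal R) (x : ι → R) (α : ι → ℕ) (S : Finset ι) : Submodule R M :=
  spanOn M (fun j => x j ^ α j) S
    ⊔ ⨆ j ∈ S, idealSat I (spanOn M (fun i => x i ^ α i) (S.erase j))

theorem idealSat_le_satSpanOn (α : ι → ℕ) (hj : j ∈ S) :
    idealSat I (spanOn M (fun i => x i ^ α i) (S.erase j)) ≤ satSpanOn I x α S :=
  le_trans (le_iSup₂ (f := fun j _ => idealSat I (spanOn M (fun i => x i ^ α i) (S.erase j))) j hj)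
    le_sup_right

theorem IsUncondWeakOn.smul_mem_spanOn_of_mem_satSpanOn (hW : IsUncondWeakOn M I x S.card S)
    (hm : m ∈ satSpanOn I x α S) {b : R} (hb : b ∈ I) :
    b • m ∈ spanOn M (fun j => x j ^ α j) S := by
  suffices satSpanOn I x α S ≤ (spanOn M (fun j => x j ^ α j) S).comap (LinearMap.lsmul R M b)
    from this hm
  refine sup_le (fun m hm => Submodule.smul_mem _ b hm) (iSup₂_le fun j hj m hm => ?_)
  exact spanOn_mono _ (Finset.erase_subset j S)
    (hW _ (Finset.erase_subset j S) (Finset.card_erase_lt_of_mem hj) α m hm b hb)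

variable [IsNoetherianRing R]

theorem IsFilterRegOn.exists_koszulD_mem_valuedIn [Finite ι] (hreg : IsFilterRegOn I L x S)
    (hxI : ∀ j, x j ∈ I) (v : ℕ) (hm : m ∈ idealSat I (L ⊔ spanOn M (fun j => x j ^ v) S)) :
    ∃ e : ℕ, ∃ F ∈ homogeneous R M ι S.card,
      koszulD (fun j => x j ^ (v + e)) F ∈ valuedIn ι L ∧ F S = (∏ j ∈ S, x j) ^ e • m := by
  induction S using Finset.induction_on generalizing L with
  | empty =>
    set F : Finset ι → M := Pi.single ∅ m with hF
    have hFsat : F ∈ valuedIn ι (idealSat I L) := by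
      refine mem_valuedIn.2 fun t => ?_
      obtain rfl | ht := eq_or_ne t ∅
      · simpa [hF] using hm
      · simp [hF, ht]
    obtain ⟨e, he⟩ := exists_koszulT_mem_valuedIn hxI
      (koszulD_mem_valuedIn (fun j => x j ^ v) hFsat) (by simp [koszulD_apply])
    refine ⟨e, koszulT x e F, koszulT_mem_homogeneous x e fun t ht => ?_, ?_, ?_⟩
    · simp [hF, show t ≠ ∅ by rintro rfl; simp at ht]
    · rwa [koszulD_koszulT x rfl]
    · simp [koszulT_apply, hF]
  | insert j S hj ih =>
    rw [spanOn_insert, ← sup_assoc, sup_right_comm] at hm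
    obtain ⟨e, c, hc, hDc, hcS⟩ := ih (hreg.of_insert hj v) hm
    have hDxc : koszulD (fun j => x j ^ (v + e)) (x j ^ e • c)
        ∈ valuedIn ι (L ⊔ x j ^ (v + e) • (⊤ : Submodule R M)) := by
      refine mem_valuedIn.2 fun t => ?_
      obtain ⟨w, hw⟩ := mem_sup_smul_top.1 (mem_valuedIn.1 hDc t)
      refine mem_sup_smul_top.2 ⟨w, ?_⟩
      convert L.smul_mem (x j ^ e) hw using 1
      rw [map_smul, Pi.smul_apply, pow_add]
      module
    obtain ⟨f, hf, hDf, hfS⟩ := exists_homogeneous_smul_koszulD_mem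
      (y := fun j => x j ^ (v + e)) hj (Submodule.smul_mem _ (x j ^ e) hc) hDxc
    have hregj : IsFilterReg I L (x j) := by
      simpa using hreg ∅ (Finset.empty_subset _) j (Finset.mem_insert_self j S)
    obtain ⟨e', he'⟩ := exists_koszulT_mem_valuedIn hxI
      (hregj.mem_valuedIn_idealSat_of_pow_smul (v + e) hDf) (by simp [koszulD_apply])
    refine ⟨e + e', koszulT x e' f, koszulT_mem_homogeneous x e' ?_, ?_, ?_⟩
    · simpa [Finset.card_insert_of_notMem hj] using hf
    · rwa [koszulD_koszulT x (add_assoc v e e')]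
    · rw [koszulT_apply, hfS, Pi.smul_apply, hcS, Finset.prod_insert hj]
      module

theorem IsUncondWeakOn.exists_smul_sub_pow_smul_mem (hW : IsUncondWeakOn M I x S.card S)
    (hreg : IsFilterRegOn I (⊥ : Submodule R M) x S) (hxI : ∀ j, x j ∈ I) (hi : i ∈ S) (hj : j ∈ S)
    (hij : i ≠ j) {a k : ℕ} (hα : α i = a + 1)
    (hm : m ∈ idealSat I (spanOn M (fun l => x l ^ Function.update α i k l) (S.erase j))) :
    ∃ w, x i • m - x i ^ k • w ∈ spanOn M (fun l => x l ^ α l) (S.erase i) ∧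
      x i ^ a • w ∈ idealSat I (spanOn M (fun l => x l ^ α l) (S.erase j)) := by
  set T := (S.erase j).erase i with hT
  set N := spanOn M (fun l => x l ^ α l) T with hN
  have hiT : i ∉ T := Finset.notMem_erase i _
  have hTS : T ⊆ S := (Finset.erase_subset i _).trans (Finset.erase_subset j S)
  have hTi : insert i T = S.erase j := Finset.insert_erase (Finset.mem_erase.2 ⟨hij, hi⟩)
  have hkill := hW (S.erase j) (Finset.erase_subset j S) (Finset.card_erase_lt_of_mem hj)
    (Function.update α i k)
  have hregi : IsFilterReg I N (x i) := hreg.isFilterReg_pow α hTS hi hiT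
  rw [← hTi, spanOn_pow_update_insert x α hiT] at hkill hm
  obtain ⟨w, hw⟩ := mem_sup_smul_top.1 (hkill m hm (x i) (hxI i))
  refine ⟨w, spanOn_mono _ (Finset.erase_subset_erase i (Finset.erase_subset j S)) hw, ?_⟩
  obtain ⟨t, ht⟩ := (hregi.pow k).mem_idealSat_of_smul_sub_smul_mem hw hm
  refine ⟨t, fun b hb => ?_⟩
  obtain ⟨v, hv⟩ := mem_sup_smul_top.1 (ht b hb)
  rw [← hTi, spanOn_insert]
  refine mem_sup_smul_top.2 ⟨v, ?_⟩
  convert N.smul_mem (x i ^ a) hv using 1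
  rw [hα]
  module

theorem IsUncondWeakOn.satSpanOn_update_le (hW : IsUncondWeakOn M I x S.card S)
    (hreg : IsFilterRegOn I (⊥ : Submodule R M) x S) (hxI : ∀ j, x j ∈ I) (hi : i ∈ S) {a k : ℕ}
    (hα : α i = a + 1) :
    satSpanOn I x (Function.update α i k) S
      ≤ (idealSat I (spanOn M (fun j => x j ^ α j) (S.erase i))
          ⊔ x i ^ k • (satSpanOn I x α S).comap (LinearMap.lsmul R M (x i ^ a))).comap
        (LinearMap.lsmul R M (x i)) := by
  have hcongr : spanOn M (fun j => x j ^ Function.update α i k j) (S.erase i)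
      = spanOn M (fun j => x j ^ α j) (S.erase i) :=
    spanOn_congr fun j hj => by rw [Function.update_of_ne (Finset.ne_of_mem_erase hj)]
  refine sup_le ?_ (iSup₂_le fun j hj m hm => ?_)
  · rw [← Finset.insert_erase hi, spanOn_insert, hcongr, Function.update_self,
      Finset.insert_erase hi]
    refine sup_le (fun m hm => Submodule.mem_sup_left (Submodule.smul_mem _ _
      (le_idealSat I _ hm))) ?_
    rintro _ hm
    obtain ⟨m, -, rfl⟩ := (Submodule.mem_smul_pointwise_iff_exists _ _ _).1 hm
    refine Submodule.mem_sup_right ?_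
    rw [LinearMap.lsmul_apply, smul_comm]
    refine Submodule.smul_mem_pointwise_smul _ _ _ (Submodule.mem_sup_left ?_)
    rw [LinearMap.lsmul_apply, smul_smul, ← pow_succ, ← hα]
    exact smul_mem_spanOn (fun j => x j ^ α j) hi m
  · obtain rfl | hij := eq_or_ne i j
    · rw [hcongr] at hm
      exact Submodule.mem_sup_left (Submodule.smul_mem _ _ hm)
    · obtain ⟨w, hw, hwsat⟩ := hW.exists_smul_sub_pow_smul_mem hreg hxI hi hj hij hα hm
      rw [Submodule.mem_comap, LinearMap.lsmul_apply, ← sub_add_cancel (x i • m) (x i ^ k • w)]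
      exact Submodule.add_mem_sup (le_idealSat I _ hw)
        (Submodule.smul_mem_pointwise_smul _ _ _ (idealSat_le_satSpanOn α hj hwsat))

theorem IsUncondWeakOn.mem_satSpanOn_of_pow_smul (hW : IsUncondWeakOn M I x S.card S)
    (hreg : IsFilterRegOn I (⊥ : Submodule R M) x S) (hxI : ∀ j, x j ∈ I) (hi : i ∈ S)
    (hα : 0 < α i) (e : ℕ)
    (hm : x i ^ e • m ∈ satSpanOn I x (Function.update α i (α i + e)) S) :
    m ∈ satSpanOn I x α S := by
  obtain ⟨a, ha⟩ : ∃ a, α i = a + 1 := ⟨α i - 1, by lia⟩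
  obtain ⟨u, hu, _, hv, huw⟩ :=
    Submodule.mem_sup.1 (hW.satSpanOn_update_le hreg hxI hi ha hm)
  obtain ⟨w, hw, rfl⟩ := (Submodule.mem_smul_pointwise_iff_exists _ _ _).1 hv
  have hmw : m - x i ^ a • w ∈ satSpanOn I x α S := by
    refine idealSat_le_satSpanOn α hi ((hreg.isFilterReg_pow α (Finset.erase_subset i S) hi
      (Finset.notMem_erase i S)).mem_idealSat_of_pow_smul (e + 1) ?_)
    convert hu using 1
    rw [LinearMap.lsmul_apply, ← eq_sub_iff_add_eq, ha] at huw
    rw [huw]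
    module
  simpa using add_mem hmw (Submodule.mem_comap.1 hw)

theorem IsUncondWeakOn.mem_satSpanOn_of_prod_pow_smul (hW : IsUncondWeakOn M I x S.card S)
    (hreg : IsFilterRegOn I (⊥ : Submodule R M) x S) (hxI : ∀ j, x j ∈ I) (hα : ∀ j, 0 < α j)
    (e : ι → ℕ) (hT : T ⊆ S)
    (hm : (∏ j ∈ T, x j ^ e j) • m ∈ satSpanOn I x (T.piecewise (α + e) α) S) :
    m ∈ satSpanOn I x α S := by
  induction T using Finset.induction_on with
  | empty => simpa using hm
  | insert i T hi ih =>
    refine ih ((Finset.subset_insert i T).trans hT) ?_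
    have hαi : T.piecewise (α + e) α i = α i := Finset.piecewise_eq_of_notMem _ _ _ hi
    refine hW.mem_satSpanOn_of_pow_smul hreg hxI (hT (Finset.mem_insert_self i T))
      (hαi ▸ hα i) (e i) ?_
    rwa [Finset.prod_insert hi, mul_smul, Finset.piecewise_insert, Pi.add_apply, ← hαi] at hm

theorem IsUncondWeakOn.smul_mem_spanOn_of_prod_pow_smul_mem (hW : IsUncondWeakOn M I x S.card S)
    (hreg : IsFilterRegOn I (⊥ : Submodule R M) x S) (hxI : ∀ j, x j ∈ I) (hα : ∀ j, 0 < α j)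
    (e : ι → ℕ) (hm : (∏ j ∈ S, x j ^ e j) • m ∈ spanOn M (fun j => x j ^ (α j + e j)) S)
    {b : R} (hb : b ∈ I) : b • m ∈ spanOn M (fun j => x j ^ α j) S := by
  refine hW.smul_mem_spanOn_of_mem_satSpanOn (hW.mem_satSpanOn_of_prod_pow_smul hreg hxI hα e
    subset_rfl (Submodule.mem_sup_left ?_)) hb
  rwa [spanOn_congr (y := fun j => x j ^ (α j + e j)) fun j hj => by
    rw [Finset.piecewise_eq_of_mem _ _ _ hj, Pi.add_apply]]

theorem IsKoszulStable.exists_prod_pow_smul_sub_mem [Finite ι]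
    (hst : IsKoszulStable (⊥ : Submodule R M) x S.card)
    (hreg : IsFilterRegOn I (⊥ : Submodule R M) x S) (hxI : ∀ j, x j ∈ I) {γ : ι → ℕ}
    (hα : ∀ j, α j = γ j + 1) (hm : m ∈ idealSat I (spanOn M (fun j => x j ^ α j) S)) :
    ∃ g : Finset ι → M, koszulD x g = 0 ∧ ∃ e : ι → ℕ,
      (∏ j ∈ S, x j ^ e j) • (m - (∏ j ∈ S, x j ^ γ j) • g S)
        ∈ spanOn M (fun j => x j ^ (α j + e j)) S := by
  have := Fintype.ofFinite ι
  obtain ⟨A, β, hβ⟩ : ∃ A, ∃ β : ι → ℕ, ∀ j, α j + β j = A + 1 :=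
    ⟨∑ j, α j, fun j => ∑ j, α j + 1 - α j, fun j => by
      have := Finset.single_le_sum (f := α) (fun _ _ => Nat.zero_le _) (Finset.mem_univ j)
      lia⟩
  obtain ⟨t, ht⟩ := hm
  obtain ⟨e, F, hF, hDF, hFS⟩ := hreg.exists_koszulD_mem_valuedIn hxI (A + 1)
    (m := (∏ j ∈ S, x j ^ β j) • m) ⟨t, fun b hb => by
      simpa [smul_comm b, hβ] using prod_pow_smul_mem_spanOn β (ht b hb)⟩
  obtain ⟨e', g, -, hDg, k, -, hk⟩ := hst (A + e) F hF (by rwa [add_right_comm])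
  refine ⟨g, by simpa using hDg, fun j => β j + e + e', ?_⟩
  have hprod : ∏ j ∈ S, x j ^ (β j + e + e')
      = (∏ j ∈ S, x j) ^ e' * (∏ j ∈ S, x j) ^ e * ∏ j ∈ S, x j ^ β j := by
    simp only [pow_add, Finset.prod_mul_distrib, Finset.prod_pow]
    ring
  have hprodγ : (∏ j ∈ S, x j ^ (β j + e + e')) * ∏ j ∈ S, x j ^ γ j
      = (∏ j ∈ S, x j) ^ (A + e + e') := by
    rw [← Finset.prod_mul_distrib, ← Finset.prod_pow]
    refine Finset.prod_congr rfl fun j _ => ?_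
    rw [← pow_add, show β j + e + e' + γ j = A + e + e' by have := hα j; have := hβ j; lia]
  have hkS := congrFun (sub_eq_zero.1 (by simpa only [valuedIn_bot, Submodule.mem_bot] using hk)) S
  rw [Pi.sub_apply, koszulT_apply, koszulT_apply, hFS] at hkS
  convert koszulD_apply_mem_spanOn (fun j => x j ^ (A + e + 1 + e')) k S using 1
  · congr! 3 with j
    have := hβ j
    lia
  · rw [← hkS, smul_sub, smul_smul, hprodγ, hprod, mul_smul, mul_smul]

theorem IsKoszulStable.killsTorsion [Finite ι]
    (hst : IsKoszulStable (⊥ : Submodule R M) x S.card) (hW : IsUncondWeakOn M I x S.card S)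
    (hx : Ideal.span (Set.range x) = I) (hreg : IsFilterRegOn I (⊥ : Submodule R M) x S)
    (hα : ∀ j, 0 < α j) : KillsTorsion I (spanOn M (fun j => x j ^ α j) S) := by
  have hxI (j) : x j ∈ I := hx ▸ Ideal.subset_span ⟨j, rfl⟩
  intro m hm b hb
  choose γ hγ using fun j => Nat.exists_eq_add_one.2 (hα j)
  obtain ⟨g, hDg, e, he⟩ := hst.exists_prod_pow_smul_sub_mem hreg hxI hγ hm
  have hg : b • (∏ j ∈ S, x j ^ γ j) • g S ∈ spanOn M (fun j => x j ^ α j) S := by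
    have hbg := smul_mem_spanOn_of_koszulD_eq_zero hx hDg S hb
    rw [smul_comm]
    simpa [hγ, add_comm] using prod_pow_smul_mem_spanOn (α := 1) γ (by simpa using hbg)
  convert add_mem (hW.smul_mem_spanOn_of_prod_pow_smul_mem hreg hxI hα e he hb) hg using 1
  module

theorem isUncondWeakOn_of_isKoszulStable [Fintype ι] {n : ℕ}
    (hst : ∀ i < n, IsKoszulStable (⊥ : Submodule R M) x i) (hx : Ideal.span (Set.range x) = I)
    (hreg : IsFilterRegOn I (⊥ : Submodule R M) x Finset.univ) :
    IsUncondWeakOn M I x n Finset.univ := by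
  induction n with
  | zero => exact fun S _ hS => absurd hS S.card.not_lt_zero
  | succ n ih =>
    have hW := ih fun i hi => hst i (by lia)
    refine isUncondWeakOn_of_pos fun S hS hSn α hα => ?_
    obtain hlt | rfl := (Nat.lt_succ_iff.1 hSn).lt_or_eq
    · exact hW S hS hlt α
    · exact (hst S.card hSn).killsTorsion (hW.mono hS) hx (hreg.mono hS) hα

end SurjectiveToWeak

section Sequences

theorem exists_embedding_map_Iio_eq {ι : Type*} [Fintype ι] {S : Finset ι} {j : ι} {r : ℕ}
    (hr : r ≤ Fintype.card ι) (hS : S.card < r) (hj : j ∉ S) :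
    ∃ g : Fin r ↪ ι, g ⟨S.card, hS⟩ = j ∧ (Finset.Iio ⟨S.card, hS⟩).map g = S := by
  classical
  set i : Fin r := ⟨S.card, hS⟩ with hi
  let f (k : Fin r) : ι := if h : k.1 < S.card then S.equivFin.symm ⟨k, h⟩ else j
  have hfS {k : Fin r} (hk : k < i) : f k ∈ S := by
    simp only [f, dif_pos (show k.1 < S.card from hk), Finset.coe_mem]
  have hfi : f i = j := dif_neg (lt_irrefl S.card)
  have hinj : Set.InjOn f (Finset.Iic i) := by
    intro k hk l hl hkl
    rcases (Finset.mem_Iic.1 hk).lt_or_eq with hk | rfl <;>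
      rcases (Finset.mem_Iic.1 hl).lt_or_eq with hl | rfl
    · simp only [f, dif_pos (show k.1 < S.card from hk), dif_pos (show l.1 < S.card from hl)] at hkl
      simpa [Fin.ext_iff] using S.equivFin.symm.injective (Subtype.ext hkl)
    · exact absurd (hkl.trans hfi ▸ hfS hk) hj
    · exact absurd (hkl.symm.trans hfi ▸ hfS hl) hj
    · rfl
  obtain ⟨T, hT, hTr⟩ := Finset.exists_superset_card_eq (s := insert j S) (n := r)
    (by rwa [Finset.card_insert_of_notMem hj]) hr
  have hfT : (Finset.Iic i).image f ⊆ T := by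
    refine (Finset.image_subset_iff.2 fun k hk => ?_).trans hT
    rcases (Finset.mem_Iic.1 hk).lt_or_eq with hk | rfl
    · exact Finset.mem_insert_of_mem (hfS hk)
    · exact hfi ▸ Finset.mem_insert_self _ _
  obtain ⟨g, hg⟩ := Finset.exists_equiv_extend_of_card_eq (by simpa using hTr.symm) hfT hinj
  refine ⟨g.toEmbedding.trans (.subtype _), (hg i (by simp)).trans hfi,
    Finset.eq_of_subset_of_card_le (fun l hl => ?_) (by simp [hi])⟩
  obtain ⟨k, hk, rfl⟩ := Finset.mem_map.1 hl
  rw [Finset.mem_Iio] at hk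
  change (g k : ι) ∈ S
  rw [hg k (Finset.mem_Iic.2 hk.le)]
  exact hfS hk

variable {M : Type} [AddCommGroup M] [Module R M] {I : Ideal R} {n r s : ℕ}

theorem pSpan_eq_spanOn (y : Fin r → R) (i : Fin r) : pSpan M y i = spanOn M y (Finset.Iio i) := by
  rw [pSpan, spanOn, Finset.coe_Iio, Set.Iio_def]

theorem IsFilterRegOn.comp_embedding {ι κ : Type*} [Fintype ι] [Fintype κ] {x : κ → R}
    {L : Submodule R M} (h : IsFilterRegOn I L x Finset.univ) (f : ι ↪ κ) :
    IsFilterRegOn I L (x ∘ f) Finset.univ := by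
  intro S _ j _ hj
  rw [← spanOn_map]
  exact h _ (Finset.subset_univ _) _ (Finset.mem_univ _) (by simpa using hj)

theorem isUncondFilterRegSeq_iff_isFilterRegOn {x : Fin s → R} :
    IsUncondFilterRegSeq I M x ↔ IsFilterRegOn I (⊥ : Submodule R M) x Finset.univ := by
  constructor
  · intro h S _ j _ hj
    have hS : S.card < s := by simpa using Finset.card_lt_univ_of_notMem hj
    obtain ⟨g, hgj, hg⟩ := exists_embedding_map_Iio_eq (Fintype.card_fin s).ge hS hj
    let σ : Equiv.Perm (Fin s) := .ofBijective g (Finite.injective_iff_bijective.1 g.injective)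
    have hσ := h σ ⟨S.card, hS⟩
    rw [pSpan_eq_spanOn] at hσ
    have hspan : spanOn M x S = spanOn M (x ∘ σ) (Finset.Iio ⟨S.card, hS⟩) := by
      conv_lhs => rw [← hg, spanOn_map]
      rfl
    rw [bot_sup_eq, hspan, ← hgj]
    exact hσ
  · intro h σ i
    rw [pSpan_eq_spanOn]
    exact (h.comp_embedding σ.toEmbedding).isFilterReg (Finset.subset_univ _) (Finset.mem_univ i)
      Finset.notMem_Iio_self

theorem isUncondWeakOn_of_isUncondWeakSeq {ι : Type*} [Fintype ι] {x : ι → R}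
    (hn : n ≤ Fintype.card ι) (hxI : ∀ j, x j ∈ I)
    (h : ∀ g : Fin n → ι, Function.Injective g → IsUncondWeakSeq I M (x ∘ g)) :
    IsUncondWeakOn M I x n Finset.univ := by
  classical
  refine isUncondWeakOn_of_pos fun S _ hS α hα m ⟨t, ht⟩ => ?_
  obtain ⟨j, hj⟩ := exists_notMem_of_card_lt (hS.trans_le hn)
  obtain ⟨g, -, hg⟩ := exists_embedding_map_Iio_eq hn hS hj
  set i : Fin n := ⟨S.card, hS⟩
  let β := Function.update (α ∘ g) i (t + 1)
  have hβ (k : Fin n) : 0 < β k := by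
    by_cases hk : k = i <;> simp [β, hk, hα]
  have hspan : spanOn M (fun j => x j ^ α j) S = pSpan M (fun k => (x ∘ g) k ^ β k) i := by
    rw [pSpan_eq_spanOn, ← hg, spanOn_map]
    refine spanOn_congr fun k hk => ?_
    simp [β, (Finset.mem_Iio.1 hk).ne]
  rw [hspan] at ht ⊢
  refine h g g.injective 1 β hβ i m (ht _ ?_)
  have hβi : β i = t + 1 := Function.update_self ..
  simpa only [Function.comp_apply, Equiv.Perm.one_apply, hβi] using
    Ideal.pow_le_pow_right t.le_succ (Ideal.pow_mem_pow (hxI (g i)) (t + 1))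

theorem IsUncondWeakOn.isUncondWeakSeq_comp [IsNoetherianRing R] {ι : Type*} [Fintype ι]
    {x : ι → R} (hW : IsUncondWeakOn M I x n Finset.univ)
    (hreg : IsFilterRegOn I (⊥ : Submodule R M) x Finset.univ) {g : Fin n → ι}
    (hg : Function.Injective g) : IsUncondWeakSeq I M (x ∘ g) := by
  intro σ α _ i m hm
  let f : Fin n ↪ ι := ⟨g ∘ σ, hg.comp σ.injective⟩
  have hWf : IsUncondWeakOn M I (x ∘ f) n Finset.univ :=
    (isUncondWeakOn_map f).1 (hW.mono (Finset.subset_univ _))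
  rw [pSpan_eq_spanOn] at hm ⊢
  refine hWf (Finset.Iio i) (Finset.subset_univ _) (by simp) α m ?_
  exact ((hreg.comp_embedding f).isFilterReg_pow α (Finset.subset_univ _) (Finset.mem_univ i)
    Finset.notMem_Iio_self).pow (α i) m hm

end Sequences

section LocalCohomology

variable {M : Type} [AddCommGroup M] [Module R M] {s p u : ℕ} {x y : Fin s → R}
  {F G : Finset (Fin s) → M}

variable (R M) in
/-- The component of degree `p` of a Koszul cochain. -/
def degreePart {s : ℕ} (p : ℕ) : (Finset (Fin s) → M) →ₗ[R] KM M s p :=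
  LinearMap.funLeft R M Subtype.val

theorem degreePart_apply (F : Finset (Fin s) → M) (t : {t : Finset (Fin s) // t.card = p}) :
    degreePart R M p F t = F t.1 := rfl

variable (R) in
theorem exists_homogeneous_degreePart_eq (f : KM M s p) :
    ∃ F ∈ homogeneous R M (Fin s) p, degreePart R M p F = f := by
  refine ⟨fun t => if h : t.card = p then f ⟨t, h⟩ else 0,
    fun t ht => dif_neg (by exact_mod_cast ht), ?_⟩
  funext t
  rw [degreePart_apply, dif_pos t.2]

theorem eq_of_degreePart_eq (hF : F ∈ homogeneous R M (Fin s) p)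
    (hG : G ∈ homogeneous R M (Fin s) p) (h : degreePart R M p F = degreePart R M p G) :
    F = G := by
  funext t
  by_cases ht : t.card = p
  · exact congrFun h ⟨t, ht⟩
  · rw [hF t (by exact_mod_cast ht), hG t (by exact_mod_cast ht)]

theorem kd_degreePart (y : Fin s → R) (p : ℕ) (F : Finset (Fin s) → M) :
    kd y p (degreePart R M p F) = degreePart R M (p + 1) (koszulD y F) := by
  funext t
  exact Finset.sum_attach t.1 fun j => (koszulSign R j t.1 * y j) • F (t.1.erase j)

theorem degreePart_mem_kZ (hF : koszulD y F = 0) : degreePart R M p F ∈ kZ y M p := by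
  rw [kZ, LinearMap.mem_ker, kd_degreePart, hF, map_zero]

theorem koszulD_eq_zero_of_degreePart_mem_kZ (hF : F ∈ homogeneous R M (Fin s) p)
    (h : degreePart R M p F ∈ kZ y M p) : koszulD y F = 0 := by
  rw [kZ, LinearMap.mem_ker, kd_degreePart] at h
  exact eq_of_degreePart_eq (p := p + 1) (by exact_mod_cast koszulD_mem_homogeneous y hF)
    (zero_mem _) (h.trans (map_zero _).symm)

theorem degreePart_mem_kB (hF : F ∈ homogeneous R M (Fin s) p) :
    degreePart R M p F ∈ kB y M p ↔ ∃ k ∈ homogeneous R M (Fin s) (p - 1), F = koszulD y k := by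
  cases p with
  | zero =>
    rw [kB, Submodule.mem_bot]
    constructor
    · intro h
      exact ⟨0, zero_mem _, by rw [map_zero, eq_of_degreePart_eq hF (zero_mem _) h]⟩
    · rintro ⟨k, hk, rfl⟩
      obtain rfl : k = 0 := funext fun t => hk t (by lia)
      rw [map_zero, map_zero]
  | succ q =>
    rw [kB, LinearMap.mem_range]
    push_cast
    rw [add_sub_cancel_right]
    constructor
    · rintro ⟨c, hc⟩
      obtain ⟨k, hk, rfl⟩ := exists_homogeneous_degreePart_eq R c
      refine ⟨k, hk, eq_of_degreePart_eq hF
        (by exact_mod_cast koszulD_mem_homogeneous y hk) ?_⟩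
      rw [← hc, kd_degreePart]
    · rintro ⟨k, -, rfl⟩
      exact ⟨degreePart R M q k, kd_degreePart y q k⟩

/-- The class in `H^p(y; M)` of the component of degree `p` of a Koszul cocycle. -/
def koszulClass (p : ℕ) (F : Finset (Fin s) → M) (hF : koszulD y F = 0) : Hk y M p :=
  Submodule.Quotient.mk ⟨degreePart R M p F, degreePart_mem_kZ hF⟩

theorem exists_koszulClass_eq (z : Hk y M p) :
    ∃ F ∈ homogeneous R M (Fin s) p, ∃ hF : koszulD y F = 0, koszulClass p F hF = z := by
  obtain ⟨⟨f, hf⟩, rfl⟩ := Submodule.Quotient.mk_surjective _ z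
  obtain ⟨F, hF, rfl⟩ := exists_homogeneous_degreePart_eq R f
  exact ⟨F, hF, koszulD_eq_zero_of_degreePart_mem_kZ hF hf, rfl⟩

theorem koszulClass_eq_iff {hF : koszulD y F = 0} {hG : koszulD y G = 0}
    (hFp : F ∈ homogeneous R M (Fin s) p) (hGp : G ∈ homogeneous R M (Fin s) p) :
    koszulClass p F hF = koszulClass p G hG ↔
      ∃ k ∈ homogeneous R M (Fin s) (p - 1), F - G = koszulD y k := by
  rw [← degreePart_mem_kB (sub_mem hFp hGp), koszulClass, koszulClass, Submodule.Quotient.eq,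
    Submodule.mem_comap, Submodule.mem_inf, map_sub]
  exact and_iff_left ((kZ y M p).sub_mem (degreePart_mem_kZ hF) (degreePart_mem_kZ hG))

theorem castHk_koszulClass (h : x = y) (hF : koszulD x F = 0) :
    castHk M p h (koszulClass p F hF) = koszulClass p F (h ▸ hF) := by
  subst h
  rfl

theorem koszulD_koszulT_eq_zero {v e : ℕ} (h : u + e = v)
    (hF : koszulD (fun j => x j ^ u) F = 0) :
    koszulD (fun j => x j ^ v) (koszulT x e F) = 0 := by
  rw [koszulD_koszulT x h, hF, map_zero]

theorem ktH_koszulClass {v : ℕ} (h : u ≤ v) (hF : koszulD (fun j => x j ^ (u + 1)) F = 0) :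
    ktH x M p u v h (koszulClass p F hF)
      = koszulClass p (koszulT x (v - u) F) (koszulD_koszulT_eq_zero (by lia) hF) := rfl

instance directedSystem_ktH (x : Fin s → R) (p : ℕ) :
    DirectedSystem (fun u : ℕ => Hk (fun j => x j ^ (u + 1)) M p)
      (fun u v h => ktH x M p u v h) where
  map_self u z := by
    obtain ⟨F, -, hF, rfl⟩ := exists_koszulClass_eq z
    simp only [ktH_koszulClass, Nat.sub_self, koszulT_zero]
  map_map w v u huv hvw z := by
    obtain ⟨F, -, hF, rfl⟩ := exists_koszulClass_eq z
    simp only [ktH_koszulClass, koszulT_koszulT, Nat.sub_add_sub_cancel hvw huv]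

/-- The image in `H^p_{⟨x⟩}(M)` of the class of a Koszul cocycle on the powers `x_j ^ (u + 1)`. -/
def locClass (p u : ℕ) (F : Finset (Fin s) → M) (hF : koszulD (fun j => x j ^ (u + 1)) F = 0) :
    KLoc x M p :=
  Module.DirectLimit.of R ℕ (fun u : ℕ => Hk (fun j => x j ^ (u + 1)) M p)
    (fun u v h => ktH x M p u v h) u (koszulClass p F hF)

theorem exists_locClass_eq (z : KLoc x M p) :
    ∃ u, ∃ F ∈ homogeneous R M (Fin s) p, ∃ hF : koszulD (fun j => x j ^ (u + 1)) F = 0,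
      locClass p u F hF = z := by
  obtain ⟨u, c, rfl⟩ := Module.DirectLimit.exists_of z
  obtain ⟨F, hFp, hF, rfl⟩ := exists_koszulClass_eq c
  exact ⟨u, F, hFp, hF, rfl⟩

theorem locClass_koszulT {v : ℕ} (h : u ≤ v) (hF : koszulD (fun j => x j ^ (u + 1)) F = 0) :
    locClass p v (koszulT x (v - u) F) (koszulD_koszulT_eq_zero (by lia) hF)
      = locClass p u F hF := by
  rw [locClass, ← ktH_koszulClass h, Module.DirectLimit.of_f, locClass]

theorem locClass_eq_iff {hF : koszulD (fun j => x j ^ (u + 1)) F = 0}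
    {hG : koszulD (fun j => x j ^ (u + 1)) G = 0}
    (hFp : F ∈ homogeneous R M (Fin s) p) (hGp : G ∈ homogeneous R M (Fin s) p) :
    locClass p u F hF = locClass p u G hG ↔ ∃ e, ∃ k ∈ homogeneous R M (Fin s) (p - 1),
      koszulT x e F - koszulT x e G = koszulD (fun j => x j ^ (u + 1 + e)) k := by
  constructor
  · intro h
    obtain ⟨v, huv, hv⟩ := Module.DirectLimit.exists_eq_of_of_eq h
    rw [ktH_koszulClass, ktH_koszulClass, koszulClass_eq_iff
      (koszulT_mem_homogeneous x _ hFp) (koszulT_mem_homogeneous x _ hGp)] at hv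
    obtain ⟨k, hk, hFG⟩ := hv
    exact ⟨v - u, k, hk, by rwa [show u + 1 + (v - u) = v + 1 by lia]⟩
  · rintro ⟨e, k, hk, hFG⟩
    rw [← locClass_koszulT (Nat.le_add_right u e) hF, ← locClass_koszulT (Nat.le_add_right u e) hG]
    refine congrArg _ ((koszulClass_eq_iff (koszulT_mem_homogeneous x _ hFp)
      (koszulT_mem_homogeneous x _ hGp)).2 ⟨k, hk, ?_⟩)
    rwa [Nat.add_sub_cancel_left, add_right_comm]

theorem klambda_koszulClass (hF : koszulD x F = 0) :
    klambda x M p (koszulClass p F hF) = locClass p 0 F (by simpa using hF) := by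
  rw [klambda, LinearMap.comp_apply, castHk_koszulClass]
  rfl

theorem klambda_koszulClass_eq_locClass_iff {g : Finset (Fin s) → M} {hg : koszulD x g = 0}
    {hF : koszulD (fun j => x j ^ (u + 1)) F = 0} (hgp : g ∈ homogeneous R M (Fin s) p)
    (hFp : F ∈ homogeneous R M (Fin s) p) :
    klambda x M p (koszulClass p g hg) = locClass p u F hF ↔
      ∃ e, ∃ k ∈ homogeneous R M (Fin s) (p - 1),
        koszulT x e F - koszulT x (u + e) g = koszulD (fun j => x j ^ (u + 1 + e)) k := by
  rw [klambda_koszulClass, ← locClass_koszulT (Nat.zero_le u), eq_comm,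
    locClass_eq_iff hFp (koszulT_mem_homogeneous x _ hgp)]
  simp only [koszulT_koszulT, Nat.sub_zero, add_comm u]

theorem lambdaSurj_iff_isKoszulStable :
    LambdaSurj x M p ↔ IsKoszulStable (⊥ : Submodule R M) x p := by
  simp only [IsKoszulStable, valuedIn_bot, Submodule.mem_bot, sub_eq_zero]
  constructor
  · intro h u F hFp hF
    obtain ⟨z, hz⟩ := h (locClass p u F hF)
    obtain ⟨g, hgp, hg, rfl⟩ := exists_koszulClass_eq z
    obtain ⟨e, k, hk, hFg⟩ := (klambda_koszulClass_eq_locClass_iff hgp hFp).1 hz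
    exact ⟨e, g, hgp, hg, k, hk, hFg⟩
  · intro h z
    obtain ⟨u, F, hFp, hF, rfl⟩ := exists_locClass_eq z
    obtain ⟨e, g, hgp, hg, k, hk, hFg⟩ := h u F hFp hF
    exact ⟨koszulClass p g hg, (klambda_koszulClass_eq_locClass_iff hgp hFp).2 ⟨e, k, hk, hFg⟩⟩

end LocalCohomology

/-- **Theorem 2.7.** Let `n` be a natural number. The following are equivalent:
(i) any `n` elements of every f-generating set `{x₁,…,x_s}` of `I` with respect to `M` with
`s ≥ n` form an unconditioned `I`-weak sequence on `M`;
(ii) there exists an f-generating set `{x₁,…,x_s}` of `I` with respect to `M` with `s ≥ n`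
such that any `n` elements of it form an unconditioned `I`-weak sequence on `M`;
(iii) there exists an f-generating set `{x₁,…,x_s}` of `I` with respect to `M` with `s ≥ n`
such that `λ^i_M : H^i(x₁,…,x_s; M) → H^i_I(M)` is surjective for all `0 ≤ i ≤ n-1`.
(An f-generating set of `I` with respect to `M` is a generating set of `I` forming an
unconditioned `I`-filter regular sequence on `M`.) -/
theorem theorem_2_7 [IsNoetherianRing R] (I : Ideal R)
    (M : Type) [AddCommGroup M] [Module R M] [Module.Finite R M] (n : ℕ) :
    ((∀ (s : ℕ) (x : Fin s → R), Ideal.span (Set.range x) = I →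
        IsUncondFilterRegSeq I M x → n ≤ s →
        ∀ g : Fin n → Fin s, Function.Injective g → IsUncondWeakSeq I M (x ∘ g)) ↔
      (∃ (s : ℕ) (x : Fin s → R), Ideal.span (Set.range x) = I ∧
        IsUncondFilterRegSeq I M x ∧ n ≤ s ∧
        ∀ g : Fin n → Fin s, Function.Injective g → IsUncondWeakSeq I M (x ∘ g))) ∧
    ((∃ (s : ℕ) (x : Fin s → R), Ideal.span (Set.range x) = I ∧
        IsUncondFilterRegSeq I M x ∧ n ≤ s ∧
        ∀ g : Fin n → Fin s, Function.Injective g → IsUncondWeakSeq I M (x ∘ g)) ↔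
      (∃ (s : ℕ) (x : Fin s → R), Ideal.span (Set.range x) = I ∧
        IsUncondFilterRegSeq I M x ∧ n ≤ s ∧
        ∀ i : ℕ, i < n → LambdaSurj x M i)) := by
  have hmem {s : ℕ} {x : Fin s → R} (hx : Ideal.span (Set.range x) = I) (j : Fin s) : x j ∈ I :=
    hx ▸ Ideal.subset_span ⟨j, rfl⟩
  refine ⟨⟨?_, ?_⟩, ⟨?_, ?_⟩⟩
  · intro h
    obtain ⟨s, x, hns, hx, hreg⟩ := exists_isFilterRegOn_univ I M n
    rw [← isUncondFilterRegSeq_iff_isFilterRegOn] at hreg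
    exact ⟨s, x, hx, hreg, hns, h s x hx hreg hns⟩
  · rintro ⟨s, x, hx, hxreg, hns, h⟩ s' y hy hyreg hns' g hg
    have hxW := isUncondWeakOn_of_isUncondWeakSeq (by simpa) (hmem hx) h
    rw [isUncondFilterRegSeq_iff_isFilterRegOn] at hxreg hyreg
    have hyW := hxW.of_isFilterRegOn hxreg hx hyreg hy (by simpa) (by simpa)
    exact hyW.isUncondWeakSeq_comp hyreg hg
  · rintro ⟨s, x, hx, hreg, hns, h⟩
    have hW := isUncondWeakOn_of_isUncondWeakSeq (by simpa) (hmem hx) h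
    exact ⟨s, x, hx, hreg, hns, fun i hi => lambdaSurj_iff_isKoszulStable.2
      (hW.isKoszulStable (isUncondFilterRegSeq_iff_isFilterRegOn.1 hreg) (hmem hx) (by simpa) hi)⟩
  · rintro ⟨s, x, hx, hreg, hns, h⟩
    have hreg' := isUncondFilterRegSeq_iff_isFilterRegOn.1 hreg
    have hW := isUncondWeakOn_of_isKoszulStable
      (fun i hi => lambdaSurj_iff_isKoszulStable.1 (h i hi)) hx hreg'
    exact ⟨s, x, hx, hreg, hns, fun g hg => hW.isUncondWeakSeq_comp hreg' hg⟩
end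
end

section
/- Suppose a is contained in the Jacobson radical of R and c := cd(a,M) = ara(a,M). Then the following are equivalent: (i) for every a-relative system of parameters x_1,...,x_c of M, a · Γ_{⟨x_{k+1}⟩}(M/⟨x_1,...,x_k⟩M) = 0 for all 0 ≤ k ≤ c-1; (ii) M is a-relative Buchsbaum; (iii) for every a-relative system of parameters x_1,...,x_c of M and every 0 ≤ k ≤ c-1, the R-module M/⟨x_1,...,x_k⟩M is a-relative quasi Buchsbaum. -/
/-!
Formalization of a statement from "A theory of relative generalized Cohen-Macaulay modules"
by Divaani-Aazar, Ghanbari Doust, Tousi and Zakeri.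

Throughout, `R` is a commutative Noetherian ring and `M` a finitely generated `R`-module.
Conventions used below:
* `locH I i M` is the local cohomology module `H^i_I(M)` (Mathlib's `localCohomology`).
* Conditions `cd(I,M) = c`, `ara(I,M) = n`, `f_I(M) = f`, `grade(I,M) = r` are expressed by
  the predicates `IsCd`, `IsAra`, `IsFinDim`, `IsGrade`.
* Sequences are given as functions `Fin r → R`; `pSpan M x i = ⟨x_0,…,x_{i-1}⟩M`.
* Koszul (co)homology is defined via the explicit (co)chain complex on the `p`-element
  subsets of `{0,…,n-1}`, and the canonical map `λ^i` into local cohomology is the structure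
  map (at exponent 1) into the direct limit of Koszul cohomologies of powers of the sequence,
  which is the realization of `H^i_{⟨x⟩}(M)` used in the paper (2.1(iv)).
-/

open CategoryTheory

noncomputable section

variable {R : Type} [CommRing R]

/-! ### Local cohomology, cohomological dimension, arithmetic rank -/

/-- The `i`-th local cohomology module `H^i_I(M)`. -/
abbrev locH (I : Ideal R) (i : ℕ) (M : Type) [AddCommGroup M] [Module R M] : ModuleCat R :=
  (localCohomology I i).obj (ModuleCat.of R M)

/-- `cd(I, M) = c`: the cohomological dimension of `I` on `M` equals `c`, i.e.
`H^c_I(M) ≠ 0` and `H^i_I(M) = 0` for all `i > c`. -/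
def IsCd (I : Ideal R) (M : Type) [AddCommGroup M] [Module R M] (c : ℕ) : Prop :=
  Nontrivial (locH I c M) ∧ ∀ i : ℕ, c < i → Subsingleton (locH I i M)

/-- `f_I(M) = f`: the `I`-finiteness dimension of `M` equals `f`, i.e. `f` is the least
integer such that `H^f_I(M)` is not finitely generated. -/
def IsFinDim (I : Ideal R) (M : Type) [AddCommGroup M] [Module R M] (f : ℕ) : Prop :=
  (∀ i : ℕ, i < f → Module.Finite R (locH I i M)) ∧ ¬ Module.Finite R (locH I f M)

/-- `M` is `I`-relative generalized Cohen-Macaulay: `cd(I,M) ≤ 0` or `cd(I,M) = f_I(M)`. -/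
def IsRelGCM (I : Ideal R) (M : Type) [AddCommGroup M] [Module R M] : Prop :=
  (∀ i : ℕ, 0 < i → Subsingleton (locH I i M)) ∨
    ∃ c : ℕ, IsCd I M c ∧ IsFinDim I M c

/-- `ara(I, M) = n`: the arithmetic rank of `I` with respect to `M` equals `n`, i.e. `n` is the
least integer such that there are `x_1, …, x_n ∈ R` with
`Rad(⟨x_1,…,x_n⟩ + Ann M) = Rad(I + Ann M)`. -/
def IsAra (I : Ideal R) (M : Type) [AddCommGroup M] [Module R M] (n : ℕ) : Prop :=
  IsLeast {k : ℕ | ∃ x : Fin k → R,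
    (Ideal.span (Set.range x) + Module.annihilator R M).radical
      = (I + Module.annihilator R M).radical} n

/-- `x_1, …, x_c` is an `I`-relative system of parameters of `M` (where `c = cd(I,M)`):
the `x_i` lie in `I` and `Rad(⟨x_1,…,x_c⟩ + Ann M) = Rad(I + Ann M)`. -/
def IsRsop (I : Ideal R) (M : Type) [AddCommGroup M] [Module R M] {c : ℕ}
    (x : Fin c → R) : Prop :=
  (∀ j, x j ∈ I) ∧
    (Ideal.span (Set.range x) + Module.annihilator R M).radical
      = (I + Module.annihilator R M).radical

/-! ### Relative Buchsbaum and relative quasi Buchsbaum modules -/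

/-- `M` is `I`-relative Buchsbaum: `cd(I,M) = ara(I,M)` and every `I`-relative system of
parameters of `M` is an `I`-weak sequence on `M`. -/
def IsRelBuchsbaum (I : Ideal R) (M : Type) [AddCommGroup M] [Module R M] : Prop :=
  ∃ c : ℕ, IsCd I M c ∧ IsAra I M c ∧
    ∀ x : Fin c → R, IsRsop I M x → IsWeakSeq I M x

/-- `M` is `I`-relative quasi Buchsbaum: `cd(I,M) = ara(I,M)` and every `I`-relative system of
parameters of `M` contained in `I²` is an `I`-weak sequence on `M`. -/
def IsRelQuasiBuchsbaum (I : Ideal R) (M : Type) [AddCommGroup M] [Module R M] : Prop :=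
  ∃ c : ℕ, IsCd I M c ∧ IsAra I M c ∧
    ∀ x : Fin c → R, IsRsop I M x → (∀ j, x j ∈ I ^ 2) → IsWeakSeq I M x

/-!
Call the colimit of the groups `Ext^n(R ⧸ I ^ t, N)` along `t` the local cohomology of `N`; it
vanishes if every class restricts to zero on some `R ⧸ I ^ s`. The crucial point is that dividing
`M` by the first `k` terms of a weak relative system of parameters lowers the cohomological
dimension by exactly `k`. Let `x ∈ I` be such that `I` annihilates `(0 :_N x)`. Multiplication by
`x` factors as `N ↠ xN ↪ N`, with kernel `(0 :_N x)` and cokernel `N ⧸ xN`. By Artin–Rees a module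
annihilated by a power of `I` has no higher local cohomology, so a class of degree `n + 1` on `N`
killed by `x` vanishes as soon as the local cohomology of `N ⧸ xN` vanishes in degree `n`. As every
class is killed by a power of `x`, vanishing for `N ⧸ xN` in degree `n` implies vanishing for `N`
in degree `n + 1`.

The rest is about radicals. A sequence `u_1, …, u_k, y_1, …, y_l` in `I` is a relative system of
parameters of `M` iff `y` is one of `M ⧸ ⟨u⟩M`, and its members may be replaced by positive powers.
Replacing one parameter by its powers gives the torsion condition; replacing the parameters of a
quotient by their squares puts them into `I ^ 2` and so reduces Buchsbaum to quasi Buchsbaum.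
-/

/-! ### Comparison of two constructions of `Ext` -/

section Homology

variable {A : Type*} [Ring A] {ι : Type*} {c : ComplexShape ι}

/-- The homology class of a cycle `z` in a complex of modules. -/
def homologyMk (K : HomologicalComplex (ModuleCat A) c) {i j : ι} (hj : c.next i = j)
    (z : K.X i) (hz : K.d i j z = 0) : K.homology i :=
  K.homologyπ i (K.cyclesMk z j hj hz)

lemma exists_iCycles_eq (K : HomologicalComplex (ModuleCat A) c) {i j : ι} (hj : c.next i = j)
    (z : K.X i) (hz : K.d i j z = 0) : ∃ w : K.cycles i, K.iCycles i w = z :=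
  ⟨K.cyclesMk z j hj hz, K.i_cyclesMk z j hj hz⟩

variable {K L : HomologicalComplex (ModuleCat A) c} {i j k : ι} (hj : c.next i = j)

lemma homologyMk_iCycles (w : K.cycles i) (hw : K.d i j (K.iCycles i w) = 0) :
    homologyMk K hj (K.iCycles i w) hw = K.homologyπ i w := by
  refine congrArg _ ((ModuleCat.mono_iff_injective (K.iCycles i)).1 inferInstance ?_)
  exact K.i_cyclesMk _ j hj hw

lemma homologyMk_surjective (h : K.homology i) : ∃ z hz, homologyMk K hj z hz = h := by
  obtain ⟨w, rfl⟩ := (ModuleCat.epi_iff_surjective (K.homologyπ i)).1 inferInstance h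
  exact ⟨K.iCycles i w, by rw [← ModuleCat.comp_apply]; simp, homologyMk_iCycles hj w _⟩

lemma homologyMk_eq_zero_iff (hk : c.prev i = k) {z : K.X i} {hz : K.d i j z = 0} :
    homologyMk K hj z hz = 0 ↔ ∃ y, K.d k i y = z := by
  obtain ⟨w, rfl⟩ := exists_iCycles_eq K hj z hz
  have hexact : (ShortComplex.mk (K.toCycles k i) (K.homologyπ i) (by simp)).Exact :=
    ShortComplex.exact_of_g_is_cokernel _ (K.homologyIsCokernel k i hk)
  rw [homologyMk_iCycles]
  refine ((ShortComplex.ShortExact.moduleCat_exact_iff_function_exact _).1 hexact w).trans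
    (exists_congr fun y => ?_)
  rw [← K.toCycles_i k i, ModuleCat.comp_apply]
  exact ((ModuleCat.mono_iff_injective (K.iCycles i)).1 inferInstance).eq_iff.symm

lemma homologyMap_homologyMk (φ : K ⟶ L) (z : K.X i) (hz : K.d i j z = 0)
    (hz' : L.d i j (φ.f i z) = 0) :
    HomologicalComplex.homologyMap φ i (homologyMk K hj z hz) =
      homologyMk L hj (φ.f i z) hz' := by
  obtain ⟨w, rfl⟩ := exists_iCycles_eq K hj z hz
  have hw : φ.f i (K.iCycles i w) = L.iCycles i (HomologicalComplex.cyclesMap φ i w) := by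
    rw [← ModuleCat.comp_apply, ← ModuleCat.comp_apply, HomologicalComplex.cyclesMap_i]
  simp only [hw, homologyMk_iCycles]
  rw [← ModuleCat.comp_apply, ← ModuleCat.comp_apply, HomologicalComplex.homologyπ_naturality]

end Homology

section ExtComparison

open Limits Opposite

variable {A : Type*} [Ring A] {C : Type*} [Category C] [Abelian C] [Linear A C]

variable (A) in
/-- The map of cochain complexes `Hom(L, Y) ⟶ Hom(K, Y)` induced by `φ : K ⟶ L`. -/
def linearYonedaObjMap {K L : ChainComplex C ℕ} (φ : K ⟶ L) (Y : C) :
    L.linearYonedaObj A Y ⟶ K.linearYonedaObj A Y :=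
  (HomologicalComplex.unopFunctor _ _).map
    ((((linearYoneda A C).obj Y).rightOp.mapHomologicalComplex _).map φ).op

lemma homologyUnop_inv_naturality {V : Type*} [Category V] [Preadditive V]
    [CategoryWithHomology V] {ι : Type*} {c : ComplexShape ι} {K L : HomologicalComplex Vᵒᵖ c}
    (φ : K ⟶ L) (i : ι) :
    (HomologicalComplex.homologyMap φ i).unop ≫ (K.homologyUnop i).inv =
      (L.homologyUnop i).inv ≫
        HomologicalComplex.homologyMap ((HomologicalComplex.unopFunctor V c).map φ.op) i :=
  (Iso.comp_inv_eq _).2 <| Eq.symm <| (Category.assoc _ _ _).trans <| (Iso.inv_comp_eq _).2 <|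
    (Quiver.Hom.op_inj (HomologicalComplex.homologyOp_hom_naturality
      ((HomologicalComplex.unopFunctor V c).map φ.op) i)).symm

variable [EnoughProjectives C]

variable (A) in
lemma isoExt_hom_naturality {X X' : C} {P : ProjectiveResolution X} {P' : ProjectiveResolution X'}
    {f : X' ⟶ X} (φ : P'.complex ⟶ P.complex) (comm : φ.f 0 ≫ P.π.f 0 = P'.π.f 0 ≫ f)
    (n : ℕ) (Y : C) :
    ((Ext A C n).map f.op).app Y ≫ (P'.isoExt n Y).hom =
      (P.isoExt n Y).hom ≫ HomologicalComplex.homologyMap (linearYonedaObjMap A φ Y) n := by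
  let F := ((linearYoneda A C).obj Y).rightOp
  let Fφ := (F.mapHomologicalComplex _).map φ
  have h₁ : ((F.leftDerived n).map f).unop ≫ (P'.isoLeftDerivedObj F n).inv.unop =
      (P.isoLeftDerivedObj F n).inv.unop ≫ (HomologicalComplex.homologyMap Fφ n).unop :=
    congrArg Quiver.Hom.unop
      (ProjectiveResolution.isoLeftDerivedObj_inv_naturality f P' P φ comm F n)
  have h₂ := homologyUnop_inv_naturality Fφ n
  exact (Category.assoc _ _ _).symm.trans <| (congrArg (· ≫ _) h₁).trans <|
    (Category.assoc _ _ _).trans <| (congrArg (_ ≫ ·) h₂).trans (Category.assoc _ _ _).symm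

/-- The class of a cocycle `z` in `((Ext A C n).obj (op X)).obj Y`, the derived functor `Ext` in
terms of which `localCohomology` is defined. Its counterpart in the groups `Abelian.Ext X Y n`,
which carry the Yoneda product, is `P.extMk z`. -/
def leftDerivedExtMk {X Y : C} (P : ProjectiveResolution X) {n : ℕ} (z : P.complex.X n ⟶ Y)
    (hz : P.complex.d (n + 1) n ≫ z = 0) : ((Ext A C n).obj (op X)).obj Y :=
  (P.isoExt n Y).inv (homologyMk (P.complex.linearYonedaObj A Y) (by simp) z hz)

variable {X X' Y : C} (P : ProjectiveResolution X) {n : ℕ}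

lemma leftDerivedExtMk_surjective (e : ((Ext A C n).obj (op X)).obj Y) :
    ∃ (z : P.complex.X n ⟶ Y) (hz : _), leftDerivedExtMk P z hz = e := by
  obtain ⟨z, hz, h⟩ := homologyMk_surjective (j := n + 1) (by simp) ((P.isoExt n Y).hom e)
  exact ⟨z, hz, (congrArg (P.isoExt n Y).inv h).trans (Iso.hom_inv_id_apply _ _)⟩

lemma leftDerivedExtMk_eq_zero_iff {z : P.complex.X (n + 1) ⟶ Y} {hz} :
    leftDerivedExtMk (A := A) P z hz = 0 ↔ ∃ y : P.complex.X n ⟶ Y, P.complex.d (n + 1) n ≫ y = z :=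
  (map_eq_zero_iff (P.isoExt (R := A) (n + 1) Y).inv.hom
    ((ModuleCat.mono_iff_injective (P.isoExt (R := A) (n + 1) Y).inv).1 inferInstance)).trans
    (homologyMk_eq_zero_iff _ (by simp))

lemma map_leftDerivedExtMk {P' : ProjectiveResolution X'} {f : X' ⟶ X} (φ : P'.complex ⟶ P.complex)
    (comm : φ.f 0 ≫ P.π.f 0 = P'.π.f 0 ≫ f)
    (z : P.complex.X n ⟶ Y) (hz : P.complex.d (n + 1) n ≫ z = 0) :
    ((Ext A C n).map f.op).app Y (leftDerivedExtMk P z hz) =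
      leftDerivedExtMk P' (φ.f n ≫ z) (by rw [← φ.comm_assoc, hz, comp_zero]) := by
  apply (ModuleCat.mono_iff_injective (P'.isoExt (R := A) n Y).hom).1 inferInstance
  rw [← ModuleCat.comp_apply, isoExt_hom_naturality A φ comm]
  simp only [leftDerivedExtMk, ModuleCat.comp_apply, Iso.inv_hom_id_apply]
  exact homologyMap_homologyMk _ (linearYonedaObjMap A φ Y) z hz _

lemma map_leftDerivedExtMk_eq_zero_iff [HasExt C] (f : X' ⟶ X) (z : P.complex.X (n + 1) ⟶ Y) (hz) :
    ((Ext A C (n + 1)).map f.op).app Y (leftDerivedExtMk P z hz) = 0 ↔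
      (Abelian.Ext.mk₀ f).comp (P.extMk z (n + 1 + 1) rfl hz) (zero_add _) = 0 := by
  let P' := projectiveResolution X'
  let φ := ProjectiveResolution.lift f P' P
  have comm : φ.f 0 ≫ P.π.f 0 = P'.π.f 0 ≫ f := ProjectiveResolution.lift_commutes_zero f P' P
  rw [map_leftDerivedExtMk P φ comm, leftDerivedExtMk_eq_zero_iff,
    ProjectiveResolution.mk₀_comp_extMk z _ rfl hz (R' := P') (g := f) ⟨φ, by
      rw [ChainComplex.single₀_map_f_zero]; exact comm⟩,
    ProjectiveResolution.extMk_eq_zero_iff _ _ _ _ _ n rfl]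

end ExtComparison

/-! ### Vanishing of local cohomology -/

section EventuallyZero

open Abelian

universe w

variable {C : Type*} [Category C] [Abelian C] [HasExt.{w} C] {J : Type*} [Category J]

/-- The class `ξ` restricts to zero far enough along the inverse system `G`, that is, its image
in the colimit of the groups `Ext (G.obj s) Y n` is zero. -/
def EventuallyZero (G : J ⥤ C) {Y : C} {n : ℕ} {t : J} (ξ : Ext (G.obj t) Y n) : Prop :=
  ∃ (s : J) (f : s ⟶ t), (Ext.mk₀ (G.map f)).comp ξ (zero_add n) = 0

/-- The colimit of the groups `Ext (G.obj t) Y n` along the inverse system `G` is zero, phrased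
elementwise. -/
def ExtColimitVanishes (G : J ⥤ C) (n : ℕ) (Y : C) : Prop :=
  ∀ (t : J) (ξ : Ext (G.obj t) Y n), EventuallyZero G ξ

variable {G : J ⥤ C} {Y Y' : C} {n : ℕ} {s t : J}

lemma eventuallyZero_zero : EventuallyZero G (0 : Ext (G.obj t) Y n) :=
  ⟨t, 𝟙 t, by rw [Ext.comp_zero]⟩

lemma EventuallyZero.of_restrict {ξ : Ext (G.obj t) Y n} (f : s ⟶ t)
    (h : EventuallyZero G ((Ext.mk₀ (G.map f)).comp ξ (zero_add n))) : EventuallyZero G ξ := by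
  obtain ⟨r, g, hg⟩ := h
  refine ⟨r, g ≫ f, ?_⟩
  rwa [Functor.map_comp, ← Ext.mk₀_comp_mk₀_assoc]

lemma EventuallyZero.comp {ξ : Ext (G.obj t) Y n} (h : EventuallyZero G ξ) {m k : ℕ}
    (η : Ext Y Y' m) (hk : n + m = k) : EventuallyZero G (ξ.comp η hk) := by
  obtain ⟨s, f, hf⟩ := h
  refine ⟨s, f, ?_⟩
  rw [← Ext.comp_assoc _ _ _ (zero_add n) hk (by omega), hf, Ext.zero_comp]

lemma ExtColimitVanishes.of_iso (h : ExtColimitVanishes G n Y) (e : Y ≅ Y') :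
    ExtColimitVanishes G n Y' := by
  intro t ξ
  have := (h t (ξ.comp (Ext.mk₀ e.inv) (add_zero n))).comp (Ext.mk₀ e.hom) (add_zero n)
  rwa [Ext.comp_assoc_of_third_deg_zero, Ext.mk₀_comp_mk₀, e.inv_hom_id, Ext.comp_mk₀_id] at this

lemma EventuallyZero.of_comp_f {S : ShortComplex C} (hS : S.ShortExact)
    (h : ExtColimitVanishes G n S.X₃) {ξ : Ext (G.obj t) S.X₁ (n + 1)}
    (hξ : ξ.comp (Ext.mk₀ S.f) (add_zero _) = 0) : EventuallyZero G ξ := by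
  obtain ⟨ρ, rfl⟩ := Ext.covariant_sequence_exact₁ _ hS ξ hξ rfl
  exact (h t ρ).comp hS.extClass rfl

lemma EventuallyZero.of_comp_g {S : ShortComplex C} (hS : S.ShortExact)
    (h : ExtColimitVanishes G n S.X₁) {ξ : Ext (G.obj t) S.X₂ n}
    (hξ : ξ.comp (Ext.mk₀ S.g) (add_zero n) = 0) : EventuallyZero G ξ := by
  obtain ⟨κ, rfl⟩ := Ext.covariant_sequence_exact₂ _ hS ξ hξ
  exact (h t κ).comp _ _

/-- If multiplication by `x` on `N` factors as `N ↠ K ↪ N`, then a class killed by `x` dies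
in two steps: first its image in `K` (obstructed by `N'`), then the class itself (obstructed
by `L`). -/
lemma EventuallyZero.of_smul_eq_zero {A : Type*} [Ring A] [Linear A C] {L N K N' : C}
    {j : L ⟶ N} {q : N ⟶ K} {i : K ⟶ N} {p : N ⟶ N'} {hjq : j ≫ q = 0} {hip : i ≫ p = 0}
    (hL : (ShortComplex.mk j q hjq).ShortExact) (hN' : (ShortComplex.mk i p hip).ShortExact)
    {x : A} (hx : q ≫ i = x • 𝟙 N)
    (hLn : ExtColimitVanishes G (n + 1) L) (hN'n : ExtColimitVanishes G n N')
    {ξ : Ext (G.obj t) N (n + 1)} (hξ : x • ξ = 0) : EventuallyZero G ξ := by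
  have hqi : (ξ.comp (Ext.mk₀ q) (add_zero _)).comp (Ext.mk₀ i) (add_zero _) = 0 := by
    rw [Ext.comp_assoc_of_third_deg_zero, Ext.mk₀_comp_mk₀, hx, ← Ext.smul_eq_comp_mk₀, hξ]
  obtain ⟨s, f, hf⟩ := EventuallyZero.of_comp_f hN' hN'n hqi
  refine .of_restrict f (.of_comp_g hL hLn ?_)
  rwa [Ext.comp_assoc_of_third_deg_zero]

lemma ExtColimitVanishes.of_pow_smul {A : Type*} [Ring A] [Linear A C] {x : A} {N : C}
    (hG : ∀ t, ∃ k : ℕ, x ^ k • 𝟙 (G.obj t) = 0)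
    (hx : ∀ (t : J) (ξ : Ext (G.obj t) N n), x • ξ = 0 → EventuallyZero G ξ) :
    ExtColimitVanishes G n N := by
  have hpow (k : ℕ) : ∀ (t : J) (ξ : Ext (G.obj t) N n), x ^ k • ξ = 0 → EventuallyZero G ξ := by
    induction k with
    | zero =>
      intro t ξ hξ
      rw [← one_smul A ξ, ← pow_zero x, hξ]
      exact eventuallyZero_zero
    | succ k ih =>
      intro t ξ hξ
      rw [pow_succ, mul_smul] at hξ
      obtain ⟨s, f, hf⟩ := ih t _ hξ
      exact .of_restrict f (hx s _ (by rwa [← Ext.comp_smul]))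
  intro t ξ
  obtain ⟨k, hk⟩ := hG t
  refine hpow k t ξ ?_
  rw [← Ext.mk₀_id_comp ξ, ← Ext.smul_comp, ← Ext.mk₀_smul, hk, Ext.mk₀_zero, Ext.zero_comp]

end EventuallyZero

section LocalCohomology

open Limits Opposite localCohomology

universe u

variable {A : Type u} [CommRing A]

lemma subsingleton_colimit_iff {J : Type u} [SmallCategory J] [IsFiltered J]
    (F : J ⥤ ModuleCat.{u} A) :
    Subsingleton (colimit F : ModuleCat.{u} A) ↔
      ∀ (j : J) (x : F.obj j), ∃ (k : J) (f : j ⟶ k), F.map f x = 0 := by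
  refine ⟨fun _ j x => Concrete.colimit_rep_eq_zero (F := F) (hx := Subsingleton.elim _ _),
    fun h => subsingleton_of_forall_eq 0 fun y => ?_⟩
  obtain ⟨j, x, rfl⟩ := Concrete.colimit_exists_rep F y
  obtain ⟨k, f, hf⟩ := h j x
  rw [← colimit.w F f, ModuleCat.comp_apply, hf, map_zero]

/-- The inverse system `⋯ ⟶ A ⧸ I ^ 2 ⟶ A ⧸ I` defining local cohomology. -/
abbrev quotientPowers (I : Ideal A) : ℕᵒᵖ ⥤ ModuleCat.{u} A :=
  ringModIdeals (idealPowersDiagram I)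

lemma subsingleton_localCohomology_iff {I : Ideal R} {n : ℕ}
    {N : ModuleCat.{0} R} :
    Subsingleton ((localCohomology I (n + 1)).obj N) ↔
      ExtColimitVanishes (quotientPowers I) (n + 1) N := by
  let F := (diagram (idealPowersDiagram I) (n + 1)).flip.obj N
  have e : (localCohomology I (n + 1)).obj N ≅ colimit F :=
    colimitObjIsoColimitCompEvaluation (diagram (idealPowersDiagram I) (n + 1)) N
  rw [e.toLinearEquiv.toEquiv.subsingleton_congr, subsingleton_colimit_iff]
  constructor
  · intro h t ξ
    let P := projectiveResolution ((quotientPowers I).obj t)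
    obtain ⟨z, hz, rfl⟩ := P.extMk_surjective ξ _ rfl
    obtain ⟨s, f, hf⟩ := h (op t) (leftDerivedExtMk P z hz)
    exact ⟨s.unop, f.unop, (map_leftDerivedExtMk_eq_zero_iff P _ z hz).1 hf⟩
  · intro h t ε
    let P := projectiveResolution ((quotientPowers I).obj t.unop)
    obtain ⟨z, hz, rfl⟩ := leftDerivedExtMk_surjective P ε
    obtain ⟨s, f, hf⟩ := h t.unop (P.extMk z _ rfl hz)
    exact ⟨op s, f.op, (map_leftDerivedExtMk_eq_zero_iff P _ z hz).2 hf⟩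

end LocalCohomology

section ArtinRees

open Opposite Abelian

universe u

variable {A : Type u} [CommRing A] {F N F' N' K : Type u} [AddCommGroup F] [Module A F]
  [AddCommGroup N] [Module A N] [AddCommGroup F'] [Module A F'] [AddCommGroup N'] [Module A N']
  [AddCommGroup K] [Module A K] {i : ℕ}

lemma mk₀_comp_eq_zero_of_range_le {P : Submodule A N}
    {η : Ext (ModuleCat.of A N) (ModuleCat.of A K) i}
    (hη : (Ext.mk₀ (ModuleCat.ofHom P.subtype)).comp η (zero_add i) = 0)
    {g : N' →ₗ[A] N} (hg : LinearMap.range g ≤ P) :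
    (Ext.mk₀ (ModuleCat.ofHom g)).comp η (zero_add i) = 0 := by
  have hfac : ModuleCat.ofHom g = ModuleCat.ofHom (g.codRestrict P fun l => hg ⟨l, rfl⟩) ≫
      ModuleCat.ofHom P.subtype := by
    ext; rfl
  rw [hfac, ← Ext.mk₀_comp_mk₀_assoc, hη, Ext.comp_zero]

lemma mk₀_comp_extClass_comp_eq_zero {p : F →ₗ[A] N} (hp : Function.Surjective p)
    {p' : F' →ₗ[A] N'} (hp' : Function.Surjective p') {a : F' →ₗ[A] F} {g : N' →ₗ[A] N}
    (hag : p ∘ₗ a = g ∘ₗ p') {P : Submodule A (LinearMap.ker p)}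
    (haP : (LinearMap.ker p').map a ≤ P.map (LinearMap.ker p).subtype)
    {ζ : Ext (ModuleCat.of A (LinearMap.ker p)) (ModuleCat.of A K) i}
    (hζ : (Ext.mk₀ (ModuleCat.ofHom P.subtype)).comp ζ (zero_add i) = 0) {j : ℕ} (hij : 1 + i = j) :
    (Ext.mk₀ (ModuleCat.ofHom g)).comp
      ((LinearMap.shortExact_shortComplexKer hp).extClass.comp ζ hij) (zero_add j) = 0 := by
  have hker : ∀ e ∈ LinearMap.ker p', a e ∈ LinearMap.ker p := fun e he =>
    Submodule.map_subtype_le _ _ (haP ⟨e, he, rfl⟩)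
  have hrange : LinearMap.range (a.restrict hker) ≤ P := by
    rintro _ ⟨e, rfl⟩
    obtain ⟨y, hy, hye⟩ := haP ⟨e, e.2, rfl⟩
    rwa [show a.restrict hker e = y from Subtype.ext hye.symm]
  let φ : p'.shortComplexKer ⟶ p.shortComplexKer :=
    { τ₁ := ModuleCat.ofHom (a.restrict hker)
      τ₂ := ModuleCat.ofHom a
      τ₃ := ModuleCat.ofHom g
      comm₁₂ := rfl
      comm₂₃ := by rw [← ModuleCat.ofHom_comp, ← ModuleCat.ofHom_comp, hag] }
  have hφ : (Ext.mk₀ φ.τ₁).comp ζ (zero_add i) = 0 := mk₀_comp_eq_zero_of_range_le hζ hrange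
  change (Ext.mk₀ φ.τ₃).comp _ _ = 0
  rw [← Ext.comp_assoc _ _ _ (zero_add 1) hij (by omega),
    ← (LinearMap.shortExact_shortComplexKer hp').extClass_naturality
      (LinearMap.shortExact_shortComplexKer hp) φ,
    Ext.comp_assoc _ _ _ (add_zero 1) (zero_add i) (by omega), hφ, Ext.comp_zero]

lemma exists_extClass_comp_eq {p : F →ₗ[A] N} (hp : Function.Surjective p) [Module.Projective A F]
    (η : Ext (ModuleCat.of A N) (ModuleCat.of A K) (i + 1)) :
    ∃ ζ : Ext (ModuleCat.of A (LinearMap.ker p)) (ModuleCat.of A K) i,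
      (LinearMap.shortExact_shortComplexKer hp).extClass.comp ζ (add_comm 1 i) = η := by
  have : Projective (ModuleCat.of A F) := (IsProjective.iff_projective _).1 inferInstance
  exact Ext.contravariant_sequence_exact₃ (LinearMap.shortExact_shortComplexKer hp) _ η
    (Ext.eq_zero_of_projective (P := ModuleCat.of A F) _) _

lemma map_subtype_smul_top (J : Ideal A) (P : Submodule A N) :
    (J • ⊤ : Submodule A P).map P.subtype = J • P := by
  rw [Submodule.map_smul'', Submodule.map_subtype_top]

/-- Artin–Rees for the kernel of a free cover of `N` lowers the degree of the class. -/
lemma exists_mk₀_smul_top_subtype_comp_eq_zero [IsNoetherianRing A] [Module.Finite A N]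
    {J : Ideal A} (hK : J ≤ Module.annihilator A K)
    (η : Ext (ModuleCat.of A N) (ModuleCat.of A K) i) :
    ∃ s : ℕ, (Ext.mk₀ (ModuleCat.ofHom (J ^ s • ⊤ : Submodule A N).subtype)).comp η
      (zero_add i) = 0 := by
  induction i generalizing N with
  | zero =>
    obtain ⟨f, rfl⟩ := (Ext.mk₀_bijective _ _).2 η
    have hker : J • ⊤ ≤ LinearMap.ker f.hom := Submodule.smul_le.2 fun a ha n _ => by
      rw [LinearMap.mem_ker, map_smul]
      exact Module.mem_annihilator.1 (hK ha) _
    have hzero : ModuleCat.ofHom (J ^ 1 • ⊤ : Submodule A N).subtype ≫ f = 0 := by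
      rw [pow_one]
      ext n
      exact hker n.2
    exact ⟨1, by rw [Ext.mk₀_comp_mk₀, hzero, Ext.mk₀_zero]⟩
  | succ i ih =>
    obtain ⟨n, p, hp⟩ := Module.Finite.exists_fin' A N
    obtain ⟨ζ, rfl⟩ := exists_extClass_comp_eq hp η
    obtain ⟨s, hs⟩ := ih ζ
    obtain ⟨k, hk⟩ := Ideal.exists_pow_inf_eq_pow_smul J (LinearMap.ker p)
    have hmap : (J ^ (k + s) • ⊤ : Submodule A (Fin n → A)).map p = J ^ (k + s) • ⊤ := by
      rw [Submodule.map_smul'', Submodule.map_top, LinearMap.range_eq_top.2 hp]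
    refine ⟨k + s, ?_⟩
    rw [← hmap]
    refine mk₀_comp_extClass_comp_eq_zero hp (p.submoduleMap_surjective _)
      (a := Submodule.subtype _) rfl ?_ hs _
    rw [map_subtype_smul_top]
    rintro _ ⟨e, he, rfl⟩
    have hmem : (e : Fin n → A) ∈ J ^ (k + s) • ⊤ ⊓ LinearMap.ker p :=
      ⟨e.2, congrArg Subtype.val he⟩
    rw [hk _ (Nat.le_add_right k s), Nat.add_sub_cancel_left] at hmem
    exact Submodule.smul_mono le_rfl inf_le_right hmem

lemma extColimitVanishes_succ_of_pow_le_annihilator [IsNoetherianRing A] {I : Ideal A} {e : ℕ}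
    (hK : I ^ e ≤ Module.annihilator A K) (i : ℕ) :
    ExtColimitVanishes (quotientPowers I) (i + 1) (ModuleCat.of A K) := by
  rintro ⟨t⟩ ξ
  have hq (t : ℕ) : Function.Surjective (I ^ t).mkQ := Submodule.mkQ_surjective _
  obtain ⟨ζ, rfl⟩ := exists_extClass_comp_eq (hq t) ξ
  obtain ⟨s, hs⟩ := exists_mk₀_smul_top_subtype_comp_eq_zero hK ζ
  refine ⟨op (e * s + t), (homOfLE (Nat.le_add_left t _)).op,
    mk₀_comp_extClass_comp_eq_zero (hq t) (hq (e * s + t)) (a := LinearMap.id) rfl ?_ hs _⟩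
  rw [map_subtype_smul_top, Submodule.map_id, Submodule.ker_mkQ, Submodule.ker_mkQ, pow_add,
    pow_mul, smul_eq_mul]

end ArtinRees

section Multiplication

universe u

variable {A : Type u} [CommRing A] {N N' : Type u} [AddCommGroup N] [Module A N]
  [AddCommGroup N'] [Module A N']

lemma pow_smul_id_quotientPowers {I : Ideal A} {x : A} (hx : x ∈ I) (t : ℕᵒᵖ) :
    x ^ t.unop • 𝟙 ((quotientPowers I).obj t) = 0 := by
  ext r
  obtain ⟨r, rfl⟩ := (I ^ t.unop).mkQ_surjective r
  exact (Submodule.Quotient.mk_eq_zero _).2 (Ideal.mul_mem_right _ _ (Ideal.pow_mem_pow hx _))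

lemma extColimitVanishes_succ_of_surjective [IsNoetherianRing A] {I : Ideal A} {x : A} (hx : x ∈ I)
    {p : N →ₗ[A] N'} (hp : Function.Surjective p)
    (hker : LinearMap.ker p = LinearMap.range (LinearMap.lsmul A N x))
    (hann : I ≤ Module.annihilator A (LinearMap.ker (LinearMap.lsmul A N x))) {n : ℕ}
    (hN' : ExtColimitVanishes (quotientPowers I) n (ModuleCat.of A N')) :
    ExtColimitVanishes (quotientPowers I) (n + 1) (ModuleCat.of A N) := by
  let q : N →ₗ[A] LinearMap.ker p :=
    (LinearMap.lsmul A N x).codRestrict _ fun m => hker ▸ LinearMap.mem_range_self _ m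
  have hq : Function.Surjective q := by
    rintro ⟨m, hm⟩
    obtain ⟨m', h⟩ := hker ▸ hm
    exact ⟨m', Subtype.ext h⟩
  have hkerq : LinearMap.ker q = LinearMap.ker (LinearMap.lsmul A N x) :=
    LinearMap.ker_codRestrict _ _ _
  have hL : ExtColimitVanishes (quotientPowers I) (n + 1) (ModuleCat.of A (LinearMap.ker q)) :=
    extColimitVanishes_succ_of_pow_le_annihilator (e := 1) (by rwa [pow_one, hkerq]) n
  exact .of_pow_smul (fun t => ⟨_, pow_smul_id_quotientPowers hx t⟩) fun t ξ hξ =>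
    .of_smul_eq_zero (LinearMap.shortExact_shortComplexKer hq)
      (LinearMap.shortExact_shortComplexKer hp) (x := x) rfl hL hN' hξ

end Multiplication

/-! ### Concatenated sequences and their radicals -/

section AppendSequences

lemma range_append {α : Type*} {k l : ℕ} (u : Fin k → α) (v : Fin l → α) :
    Set.range (Fin.append u v) = Set.range u ∪ Set.range v := by
  ext a
  simp only [Set.mem_union, Set.mem_range, ← not_iff_not (a := ∃ y, Fin.append u v y = a),
    not_or, not_exists, Fin.forall_fin_add, Fin.append_left, Fin.append_right]

lemma append_image_Iio_natAdd {α : Type*} {k l : ℕ} (u : Fin k → α) (v : Fin l → α) (i : Fin l) :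
    Fin.append u v '' Set.Iio (Fin.natAdd k i) = Set.range u ∪ v '' Set.Iio i := by
  have hu (j : Fin k) : Fin.castAdd l j < Fin.natAdd k i := by
    rw [Fin.lt_def, Fin.val_castAdd, Fin.val_natAdd]; omega
  ext a
  refine not_iff_not.1 ?_
  simp only [Set.mem_union, Set.mem_range, Set.mem_image, Set.mem_Iio, not_or, not_exists, not_and,
    Fin.forall_fin_add, Fin.append_left, Fin.append_right, hu, forall_const,
    Fin.natAdd_lt_natAdd_iff]

variable {I : Ideal R} {M : Type} [AddCommGroup M] [Module R M] {k l : ℕ} {u : Fin k → R}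
  {v : Fin l → R}

variable (M) in
/-- The submodule `⟨u_1, …, u_k⟩M` of `M` generated by a whole sequence, whereas `pSpan M u i` is
generated by a proper initial segment of it. -/
abbrev seqSpan (u : Fin k → R) : Submodule R M :=
  Ideal.span (Set.range u) • ⊤

lemma seqSpan_append : seqSpan M (Fin.append u v) = seqSpan M u ⊔ seqSpan M v := by
  rw [seqSpan, range_append, Ideal.span_union, Submodule.sup_smul]

lemma seqSpan_eq_range_lsmul (v : Fin 1 → R) :
    seqSpan M v = LinearMap.range (LinearMap.lsmul R M (v 0)) := by
  rw [seqSpan, Set.range_unique, Submodule.ideal_span_singleton_smul]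
  exact Submodule.map_top _

lemma pSpan_append_natAdd (i : Fin l) :
    pSpan M (Fin.append u v) (Fin.natAdd k i) = seqSpan M u ⊔ pSpan M v i := by
  rw [seqSpan, pSpan, pSpan, ← Submodule.sup_smul, ← Ideal.span_union]
  exact congrArg (Ideal.span · • ⊤) (append_image_Iio_natAdd u v i)

lemma pSpan_append_castAdd (i : Fin k) :
    pSpan M (Fin.append u v) (Fin.castAdd l i) = pSpan M u i := by
  change Ideal.span (Fin.append u v '' Set.Iio _) • ⊤ = Ideal.span (u '' Set.Iio i) • ⊤
  rw [← Fin.image_castAdd_Iio, Set.image_image]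
  simp only [Fin.append_left]

lemma pSpan_zero (v : Fin (l + 1) → R) : pSpan M v 0 = ⊥ := by
  simp [pSpan]

lemma pSpan_append_natAdd_zero {v : Fin (l + 1) → R} :
    pSpan M (Fin.append u v) (Fin.natAdd k 0) = seqSpan M u := by
  rw [pSpan_append_natAdd, pSpan_zero, sup_bot_eq]

lemma map_mkQ_smul_top (N : Submodule R M) (J : Ideal R) :
    (J • ⊤ : Submodule R M).map N.mkQ = J • ⊤ := by
  rw [Submodule.map_smul'', Submodule.map_top, Submodule.range_mkQ]

lemma mk_mem_pSpan_iff {i : Fin l} {m : M} :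
    (Submodule.Quotient.mk m : M ⧸ seqSpan M u) ∈ pSpan (M ⧸ seqSpan M u) v i ↔
      m ∈ pSpan M (Fin.append u v) (Fin.natAdd k i) := by
  rw [pSpan_append_natAdd, ← Submodule.comap_map_mkQ, pSpan, pSpan, map_mkQ_smul_top]
  rfl

lemma IsWeakSeq.of_append_right (h : IsWeakSeq I M (Fin.append u v)) :
    IsWeakSeq I (M ⧸ seqSpan M u) v := by
  intro i m hm a ha
  obtain ⟨m, rfl⟩ := Submodule.Quotient.mk_surjective _ m
  rw [← Submodule.Quotient.mk_smul, mk_mem_pSpan_iff] at hm ⊢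
  exact h _ m (by rwa [Fin.append_right]) a ha

lemma IsWeakSeq.of_append_left (h : IsWeakSeq I M (Fin.append u v)) : IsWeakSeq I M u := by
  intro i m hm
  have := h (Fin.castAdd l i) m
  rw [Fin.append_left, pSpan_append_castAdd] at this
  exact this hm

lemma IsWeakSeq.le_annihilator_ker {v : Fin (l + 1) → R} (h : IsWeakSeq I M v) :
    I ≤ Module.annihilator R (LinearMap.ker (LinearMap.lsmul R M (v 0))) := by
  refine fun a ha => Module.mem_annihilator.2 fun ⟨m, hm⟩ => Subtype.ext ?_
  have h₀ := h 0 m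
  rw [pSpan_zero] at h₀
  exact h₀ hm a ha

lemma append_cases {α : Type*} {motive : ∀ c, (Fin c → α) → Fin c → Prop}
    (h : ∀ k l (u : Fin k → α) (v : Fin (l + 1) → α),
      motive (k + (l + 1)) (Fin.append u v) (Fin.natAdd k 0))
    (c : ℕ) (x : Fin c → α) (k : Fin c) : motive c x k := by
  obtain ⟨k, hk⟩ := k
  obtain ⟨l, rfl⟩ := Nat.exists_eq_add_of_lt hk
  have := h k l (fun i => x (Fin.castAdd (l + 1) i)) (fun i => x (Fin.natAdd k i))
  rwa [Fin.append_castAdd_natAdd] at this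

end AppendSequences

section Radical

variable {I : Ideal R} {M : Type} [AddCommGroup M] [Module R M]

lemma IsRsop.pow {c : ℕ} {x : Fin c → R} (hx : IsRsop I M x) {e : Fin c → ℕ} (he : ∀ i, e i ≠ 0) :
    IsRsop I M fun i => x i ^ e i := by
  refine ⟨fun i => Ideal.pow_mem_of_mem _ (hx.1 i) _ (Nat.pos_of_ne_zero (he i)), ?_⟩
  rw [← hx.2]
  refine le_antisymm (Ideal.radical_mono (sup_le_sup_right (Ideal.span_le.2 ?_) _))
    (Ideal.radical_le_radical_iff.2 (sup_le (Ideal.span_le.2 ?_)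
      (le_sup_right.trans Ideal.le_radical)))
  · rintro _ ⟨i, rfl⟩
    exact Ideal.pow_mem_of_mem _ (Ideal.subset_span (Set.mem_range_self i)) _
      (Nat.pos_of_ne_zero (he i))
  · rintro _ ⟨i, rfl⟩
    refine Ideal.mem_radical_iff.2 ⟨e i, ?_⟩
    exact Ideal.mem_sup_left (Ideal.subset_span (Set.mem_range_self i))

lemma IsRsop.exists_pow_le_annihilator {k : ℕ} {u : Fin k → R} (hu : IsRsop I M u) (hI : I.FG) :
    ∃ e : ℕ, I ^ e ≤ Module.annihilator R (M ⧸ seqSpan M u) := by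
  have hle : Ideal.span (Set.range u) + Module.annihilator R M ≤
      Module.annihilator R (M ⧸ seqSpan M u) :=
    sup_le ((Module.isTorsionBySet_iff_subset_annihilator _ _).1
        (Module.isTorsionBySet_quotient_ideal_smul M _))
      (LinearMap.annihilator_le_of_surjective _ (Submodule.mkQ_surjective _))
  have hrad : I ≤ (Ideal.span (Set.range u) + Module.annihilator R M).radical :=
    (le_sup_left.trans Ideal.le_radical).trans hu.2.ge
  obtain ⟨e, he⟩ := Ideal.exists_pow_le_of_le_radical_of_fg hrad hI
  exact ⟨e, he.trans hle⟩

variable [Module.Finite R M]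

lemma radical_sup_annihilator_quotient (J K : Ideal R) :
    (K + Module.annihilator R (M ⧸ (J • ⊤ : Submodule R M))).radical =
      (J + K + Module.annihilator R M).radical := by
  rw [← PrimeSpectrum.zeroLocus_eq_iff]
  simp only [Submodule.add_eq_sup, PrimeSpectrum.zeroLocus_sup, ← Module.support_eq_zeroLocus,
    Module.support_quotient]
  rw [Set.inter_comm (Module.support R M), Set.inter_left_comm, Set.inter_assoc]

variable {k l : ℕ} {u : Fin k → R} {v : Fin l → R}

lemma radical_span_append_eq_iff (hu : ∀ i, u i ∈ I) :
    (Ideal.span (Set.range (Fin.append u v)) + Module.annihilator R M).radical =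
        (I + Module.annihilator R M).radical ↔
      (Ideal.span (Set.range v) + Module.annihilator R (M ⧸ seqSpan M u)).radical =
        (I + Module.annihilator R (M ⧸ seqSpan M u)).radical := by
  have huI : Ideal.span (Set.range u) + I = I :=
    sup_eq_right.2 (Ideal.span_le.2 (Set.range_subset_iff.2 hu))
  rw [radical_sup_annihilator_quotient, radical_sup_annihilator_quotient, huI, range_append,
    Ideal.span_union, Submodule.add_eq_sup (Ideal.span (Set.range u))]

lemma isRsop_append_iff :
    IsRsop I M (Fin.append u v) ↔ (∀ i, u i ∈ I) ∧ IsRsop I (M ⧸ seqSpan M u) v := by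
  rw [IsRsop, IsRsop, Fin.forall_fin_add, and_assoc]
  simp only [Fin.append_left, Fin.append_right]
  exact and_congr_right fun hu => and_congr_right fun _ => radical_span_append_eq_iff hu

lemma IsAra.quotient_seqSpan (ha : IsAra I M (k + l)) (hx : IsRsop I M (Fin.append u v)) :
    IsAra I (M ⧸ seqSpan M u) l := by
  obtain ⟨hu, hv⟩ := isRsop_append_iff.1 hx
  refine ⟨⟨v, hv.2⟩, ?_⟩
  rintro l' ⟨y, hy⟩
  exact Nat.le_of_add_le_add_left (ha.2 ⟨Fin.append u y, (radical_span_append_eq_iff hu).2 hy⟩)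

end Radical

/-! ### Relative Buchsbaum modules -/

section WeakSequences

variable [IsNoetherianRing R] {I : Ideal R} {M : Type} [AddCommGroup M] [Module R M] {k l n : ℕ}
  {u : Fin k → R}

lemma IsWeakSeq.extColimitVanishes (h : IsWeakSeq I M u) (hu : ∀ i, u i ∈ I)
    (hn : ExtColimitVanishes (quotientPowers I) n (ModuleCat.of R (M ⧸ seqSpan M u))) :
    ExtColimitVanishes (quotientPowers I) (n + k) (ModuleCat.of R M) := by
  induction k generalizing n with
  | zero =>
    refine hn.of_iso (Submodule.quotEquivOfEqBot _ ?_).toModuleIso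
    rw [seqSpan, Set.range_eq_empty, Ideal.span_empty, Submodule.bot_smul]
  | succ k ih =>
    obtain ⟨w, v, rfl⟩ : ∃ (w : Fin k → R) (v : Fin 1 → R), u = Fin.append w v :=
      ⟨_, _, Fin.append_castAdd_natAdd.symm⟩
    have hle : seqSpan M w ≤ seqSpan M (Fin.append w v) := seqSpan_append.ge.trans' le_sup_left
    have hker : LinearMap.ker (Submodule.factor hle) =
        LinearMap.range (LinearMap.lsmul R (M ⧸ seqSpan M w) (v 0)) := by
      rw [Submodule.factor, Submodule.ker_mapQ, Submodule.comap_id, seqSpan_append,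
        Submodule.map_sup, Submodule.mkQ_map_self, bot_sup_eq, map_mkQ_smul_top]
      exact seqSpan_eq_range_lsmul v
    rw [show n + (k + 1) = n + 1 + k by omega]
    exact ih h.of_append_left (fun i => by simpa using hu (Fin.castAdd 1 i))
      (extColimitVanishes_succ_of_surjective (by simpa using hu (Fin.natAdd k 0))
        (Submodule.factor_surjective hle) hker h.of_append_right.le_annihilator_ker hn)

lemma IsWeakSeq.subsingleton_locH_of_isRsop (h : IsWeakSeq I M u) (hu : IsRsop I M u) {i : ℕ}
    (hi : k < i) : Subsingleton (locH I i M) := by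
  obtain ⟨j, rfl⟩ := Nat.exists_eq_add_of_lt hi
  obtain ⟨e, he⟩ := hu.exists_pow_le_annihilator (IsNoetherian.noetherian I)
  rw [subsingleton_localCohomology_iff, add_comm k, add_right_comm]
  exact h.extColimitVanishes hu.1 (extColimitVanishes_succ_of_pow_le_annihilator he j)

lemma IsWeakSeq.nontrivial_locH_quotient (h : IsWeakSeq I M u) (hu : ∀ i, u i ∈ I) {l : ℕ}
    [hM : Nontrivial (locH I (k + (l + 1)) M)] :
    Nontrivial (locH I (l + 1) (M ⧸ seqSpan M u)) := by
  contrapose! hM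
  rw [subsingleton_localCohomology_iff] at hM
  rw [← add_assoc, subsingleton_localCohomology_iff, add_assoc, add_comm]
  exact h.extColimitVanishes hu hM

lemma IsCd.quotient_seqSpan [Module.Finite R M] {l : ℕ} {v : Fin (l + 1) → R}
    (hc : IsCd I M (k + (l + 1))) (hx : IsRsop I M (Fin.append u v))
    (hw : IsWeakSeq I M (Fin.append u v)) : IsCd I (M ⧸ seqSpan M u) (l + 1) := by
  obtain ⟨hu, hv⟩ := isRsop_append_iff.1 hx
  have := hc.1
  exact ⟨hw.of_append_left.nontrivial_locH_quotient hu, fun i hi =>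
    hw.of_append_right.subsingleton_locH_of_isRsop hv hi⟩

end WeakSequences

section Buchsbaum

variable {I : Ideal R} {M : Type} [AddCommGroup M] [Module R M] {c : ℕ} {x : Fin c → R}

lemma IsRelBuchsbaum.isWeakSeq (h : IsRelBuchsbaum I M) (ha : IsAra I M c) (hx : IsRsop I M x) :
    IsWeakSeq I M x := by
  obtain ⟨c', -, ha', hw⟩ := h
  obtain rfl : c' = c := ha'.unique ha
  exact hw x hx

lemma IsRelQuasiBuchsbaum.isWeakSeq (h : IsRelQuasiBuchsbaum I M) (ha : IsAra I M c)
    (hx : IsRsop I M x) (hxI : ∀ i, x i ∈ I ^ 2) : IsWeakSeq I M x := by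
  obtain ⟨c', -, ha', hw⟩ := h
  obtain rfl : c' = c := ha'.unique ha
  exact hw x hx hxI

/-- Replacing `x k` by a power of itself gives another relative system of parameters. -/
lemma IsRelBuchsbaum.smul_mem_pSpan_of_pow_smul_mem (h : IsRelBuchsbaum I M) (ha : IsAra I M c)
    (hx : IsRsop I M x) {k : Fin c} {m : M} {t : ℕ} (hm : x k ^ t • m ∈ pSpan M x k) {a : R}
    (haI : a ∈ I) : a • m ∈ pSpan M x k := by
  obtain rfl | ht := eq_or_ne t 0
  · exact Submodule.smul_mem _ _ (by simpa using hm)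
  let y : Fin c → R := fun i => x i ^ if i = k then t else 1
  have hy : IsWeakSeq I M y := h.isWeakSeq ha (hx.pow fun i => by split_ifs <;> simp [ht])
  have hpre : pSpan M y k = pSpan M x k := by
    refine congrArg (Ideal.span · • ⊤) (Set.image_congr fun i (hi : i < k) => ?_)
    simp [y, hi.ne]
  rw [← hpre] at hm ⊢
  exact hy k m (by simpa [y] using hm) a haI

variable [Module.Finite R M]

lemma IsRelBuchsbaum.isRelQuasiBuchsbaum_quotient [IsNoetherianRing R] (h : IsRelBuchsbaum I M)
    (hc : IsCd I M c) (ha : IsAra I M c) (hx : IsRsop I M x) (k : Fin c) :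
    IsRelQuasiBuchsbaum I (M ⧸ pSpan M x k) := by
  induction c, x, k using append_cases with | h k l u v
  rw [pSpan_append_natAdd_zero]
  refine ⟨l + 1, hc.quotient_seqSpan hx (h.isWeakSeq ha hx), ha.quotient_seqSpan hx,
    fun y hy _ => (h.isWeakSeq ha ?_).of_append_right⟩
  exact isRsop_append_iff.2 ⟨(isRsop_append_iff.1 hx).1, hy⟩

/-- The squares of the tail `x k, x (k + 1), …` form a relative system of parameters of the
quotient that lies in `I ^ 2`. -/
lemma isWeakSeq_of_isRelQuasiBuchsbaum_quotient (ha : IsAra I M c) (hx : IsRsop I M x)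
    (h : ∀ k, IsRelQuasiBuchsbaum I (M ⧸ pSpan M x k)) : IsWeakSeq I M x := by
  intro k m hm a haI
  specialize h k
  induction c, x, k using append_cases with | h k l u v
  obtain ⟨hu, hv⟩ := isRsop_append_iff.1 hx
  have hsq : IsWeakSeq I (M ⧸ seqSpan M u) fun i => v i ^ 2 := by
    rw [pSpan_append_natAdd_zero] at h
    exact h.isWeakSeq (ha.quotient_seqSpan hx) (hv.pow fun _ => two_ne_zero)
      fun i => Ideal.pow_mem_pow (hv.1 i) 2
  have hv0 : v 0 ^ 2 • m ∈ pSpan M (Fin.append u fun i => v i ^ 2) (Fin.natAdd k 0) := by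
    rw [pSpan_append_natAdd_zero] at hm ⊢
    rw [Fin.append_right] at hm
    rw [pow_two, mul_smul]
    exact Submodule.smul_mem _ _ hm
  have := hsq 0 (Submodule.Quotient.mk m) (mk_mem_pSpan_iff.2 hv0) a haI
  rw [← Submodule.Quotient.mk_smul, mk_mem_pSpan_iff, pSpan_append_natAdd_zero] at this
  rwa [pSpan_append_natAdd_zero]

end Buchsbaum

theorem theorem_4_8_general [IsNoetherianRing R] (I : Ideal R)
    (M : Type) [AddCommGroup M] [Module R M] [Module.Finite R M]
    (c : ℕ) (hc : IsCd I M c) (ha : IsAra I M c) :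
    ((∀ x : Fin c → R, IsRsop I M x → ∀ k : Fin c, ∀ m : M,
        (∃ t : ℕ, x k ^ t • m ∈ pSpan M x k) → ∀ r ∈ I, r • m ∈ pSpan M x k) ↔
      IsRelBuchsbaum I M) ∧
    (IsRelBuchsbaum I M ↔
      ∀ x : Fin c → R, IsRsop I M x → ∀ k : Fin c,
        IsRelQuasiBuchsbaum I (M ⧸ pSpan M x k)) := by
  refine ⟨⟨fun h => ?_, fun h x hx k m ⟨t, hm⟩ r hr => ?_⟩, fun h x hx k => ?_, fun h => ?_⟩
  · exact ⟨c, hc, ha, fun x hx k m hm => h x hx k m ⟨1, by rwa [pow_one]⟩⟩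
  · exact h.smul_mem_pSpan_of_pow_smul_mem ha hx hm hr
  · exact h.isRelQuasiBuchsbaum_quotient hc ha hx k
  · exact ⟨c, hc, ha, fun x hx => isWeakSeq_of_isRelQuasiBuchsbaum_quotient ha hx (h x hx)⟩

/-- **Theorem 4.8.** Suppose `I` is contained in the Jacobson radical of `R` and
`c := cd(I,M) = ara(I,M)`. Then the following are equivalent:
(i) for every `I`-relative system of parameters `x₁, …, x_c` of `M` one has
`I • Γ_{⟨x_{k+1}⟩}(M/⟨x₁,…,x_k⟩M) = 0` for all `0 ≤ k ≤ c-1` (expressed elementwise);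
(ii) `M` is `I`-relative Buchsbaum;
(iii) for every `I`-relative system of parameters `x₁, …, x_c` of `M` and every
`0 ≤ k ≤ c-1`, the module `M/⟨x₁,…,x_k⟩M` is `I`-relative quasi Buchsbaum. -/
theorem theorem_4_8 [IsNoetherianRing R] (I : Ideal R)
    (hjac : I ≤ (⊥ : Ideal R).jacobson)
    (M : Type) [AddCommGroup M] [Module R M] [Module.Finite R M]
    (c : ℕ) (hc : IsCd I M c) (ha : IsAra I M c) :
    ((∀ x : Fin c → R, IsRsop I M x → ∀ k : Fin c, ∀ m : M,
        (∃ t : ℕ, x k ^ t • m ∈ pSpan M x k) → ∀ r ∈ I, r • m ∈ pSpan M x k) ↔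
      IsRelBuchsbaum I M) ∧
    (IsRelBuchsbaum I M ↔
      ∀ x : Fin c → R, IsRsop I M x → ∀ k : Fin c,
        IsRelQuasiBuchsbaum I (M ⧸ pSpan M x k)) :=
  theorem_4_8_general I M c hc ha
end
end
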